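/- arXiv:2406.17089 — 2 statements merged into one kernel-verified Lean document; each statement's English description precedes it below -/
import Mathlib

section
/- Let G be a connected graph of order n and size m. Then its adjacency spectral radius satisfies ρ(G) ≤ √(2m − n + 1), with equality if and only if G = K_n or G = K_{1,n−1}. -/
open SimpleGraph

/-- The (adjacency) spectral radius of a graph: the largest eigenvalue of its
adjacency matrix. -/
noncomputable def graphSpectralRadius {V : Type*} [Fintype V] [DecidableEq V]
    (G : SimpleGraph V) [DecidableRel G.Adj] : ℝ :=
  sSup (spectrum ℝ (G.adjMatrix ℝ))

section Helpers

variable {V : Type*} [Fintype V] [DecidableEq V]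

lemma aux_identity (a : V → V → ℝ) (hsymm : ∀ i j, a i j = a j i)
    (x : V → ℝ) (μ : ℝ) (hx : ∀ i, ∑ j, a i j * x j = μ * x i) :
    ((∑ i, ∑ j, a i j) - Fintype.card V + 1 - μ ^ 2) * ∑ i, x i ^ 2 =
      (∑ i, (1 / 2) * ∑ j, ∑ k, a i j * a i k * (x j - x k) ^ 2) +
      ∑ i, ∑ j, (1 - a i j - if i = j then 1 else 0) * ((∑ k, a i k) - 1) * x j ^ 2 := by
  have h1 : ∀ i, (1 / 2) * ∑ j, ∑ k, a i j * a i k * (x j - x k) ^ 2 =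
      (∑ k, a i k) * (∑ j, a i j * x j ^ 2) - μ ^ 2 * x i ^ 2 := by
    intro i
    have e1 : ∑ j, ∑ k, a i j * a i k * (x j - x k) ^ 2 =
        (∑ j, a i j * x j ^ 2) * (∑ k, a i k) + (∑ j, a i j) * (∑ k, a i k * x k ^ 2)
          - 2 * ((∑ j, a i j * x j) * (∑ k, a i k * x k)) := by
      rw [Finset.sum_mul_sum, Finset.sum_mul_sum, Finset.sum_mul_sum]
      simp only [Finset.mul_sum (a := (2 : ℝ)), ← Finset.sum_add_distrib,
        ← Finset.sum_sub_distrib]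
      refine Finset.sum_congr rfl fun j _ => Finset.sum_congr rfl fun k _ => ?_
      ring
    rw [e1, hx]
    ring
  have h2 : ∀ i, ∑ j, (1 - a i j - if i = j then 1 else 0) * ((∑ k, a i k) - 1) * x j ^ 2 =
      ((∑ k, a i k) - 1) * (∑ j, x j ^ 2) - (∑ k, a i k) * (∑ j, a i j * x j ^ 2)
       + (∑ j, a i j * x j ^ 2) - ((∑ k, a i k) - 1) * x i ^ 2 := by
    intro i
    have e2 : ((∑ k, a i k) - 1) * x i ^ 2 =
        ∑ j, (if i = j then 1 else 0) * (((∑ k, a i k) - 1) * x j ^ 2) := by simp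
    rw [e2]
    generalize (∑ k, a i k) = d
    simp only [Finset.mul_sum, ← Finset.sum_add_distrib, ← Finset.sum_sub_distrib]
    refine Finset.sum_congr rfl fun j _ => ?_
    ring
  have h3 : ∑ i, ∑ j, a i j * x j ^ 2 = ∑ i, (∑ k, a i k) * x i ^ 2 := by
    rw [Finset.sum_comm]
    refine Finset.sum_congr rfl fun j _ => ?_
    rw [Finset.sum_mul]
    exact Finset.sum_congr rfl fun i _ => by rw [hsymm]
  simp only [h1, h2]
  simp only [Finset.sum_sub_distrib, Finset.sum_add_distrib, sub_mul, ← Finset.sum_mul,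
    ← Finset.mul_sum, h3, one_mul]
  simp
  ring

lemma mem_spec_of (G : SimpleGraph V) [DecidableRel G.Adj] (μ : ℝ) (x : V → ℝ) (hx0 : x ≠ 0)
    (hx : ∀ i, ∑ j, G.adjMatrix ℝ i j * x j = μ * x i) : μ ∈ spectrum ℝ (G.adjMatrix ℝ) := by
  rw [← Matrix.spectrum_toLin', ← Module.End.hasEigenvalue_iff_mem_spectrum]
  refine Module.End.hasEigenvalue_of_hasEigenvector (x := x) ⟨?_, hx0⟩
  rw [Module.End.mem_eigenspace_iff]
  ext i
  simpa [Matrix.toLin'_apply, Matrix.mulVec, dotProduct] using hx i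

lemma exists_of_mem_spec (G : SimpleGraph V) [DecidableRel G.Adj] (μ : ℝ)
    (h : μ ∈ spectrum ℝ (G.adjMatrix ℝ)) :
    ∃ x : V → ℝ, x ≠ 0 ∧ ∀ i, ∑ j, G.adjMatrix ℝ i j * x j = μ * x i := by
  rw [← Matrix.spectrum_toLin', ← Module.End.hasEigenvalue_iff_mem_spectrum] at h
  obtain ⟨x, hx⟩ := h.exists_hasEigenvector
  refine ⟨x, hx.2, fun i => ?_⟩
  have := congrFun hx.apply_eq_smul i
  simpa [Matrix.toLin'_apply, Matrix.mulVec, dotProduct] using this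

lemma spec_finite (G : SimpleGraph V) [DecidableRel G.Adj] :
    (spectrum ℝ (G.adjMatrix ℝ)).Finite := Matrix.finite_real_spectrum

lemma spec_nonempty [Nonempty V] (G : SimpleGraph V) [DecidableRel G.Adj] :
    (spectrum ℝ (G.adjMatrix ℝ)).Nonempty := by
  have hA : (G.adjMatrix ℝ).IsHermitian := by
    ext i j; simp [Matrix.conjTranspose_apply, SimpleGraph.adj_comm]
  exact ⟨hA.eigenvalues (Classical.arbitrary V), hA.eigenvalues_mem_spectrum_real _⟩

lemma sum_adjRow (G : SimpleGraph V) [DecidableRel G.Adj] (i : V) :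
    ∑ j, G.adjMatrix ℝ i j = G.degree i := by
  simp [SimpleGraph.adjMatrix_apply, ← SimpleGraph.card_neighborFinset_eq_degree,
    SimpleGraph.neighborFinset_eq_filter]

lemma sum_sum_adj (G : SimpleGraph V) [DecidableRel G.Adj] :
    ∑ i, ∑ j, G.adjMatrix ℝ i j = 2 * (G.edgeFinset.card : ℝ) := by
  simp only [sum_adjRow]
  exact_mod_cast G.sum_degrees_eq_twice_card_edges

lemma degree_ge_one (G : SimpleGraph V) [DecidableRel G.Adj] (hc : G.Connected) (i j : V)
    (hij : i ≠ j) : 1 ≤ G.degree i := by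
  have : Nontrivial V := ⟨i, j, hij⟩
  exact hc.preconnected.degree_pos_of_nontrivial i

lemma term1_nonneg (G : SimpleGraph V) [DecidableRel G.Adj] (x : V → ℝ) (i j k : V) :
    0 ≤ G.adjMatrix ℝ i j * G.adjMatrix ℝ i k * (x j - x k) ^ 2 := by
  simp only [SimpleGraph.adjMatrix_apply]
  split_ifs <;> simp <;> positivity

lemma term2_nonneg (G : SimpleGraph V) [DecidableRel G.Adj] (hc : G.Connected) (x : V → ℝ)
    (i j : V) :
    0 ≤ (1 - G.adjMatrix ℝ i j - if i = j then 1 else 0) *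
      ((∑ k, G.adjMatrix ℝ i k) - 1) * x j ^ 2 := by
  rw [sum_adjRow]
  by_cases hij : i = j
  · subst hij; simp
  · have : (1 : ℝ) ≤ G.degree i := by exact_mod_cast degree_ge_one G hc i j hij
    have h0 : 0 ≤ (G.degree i : ℝ) - 1 := by linarith
    by_cases h : G.Adj i j
    · simp [h, hij]
    · simp only [SimpleGraph.adjMatrix_apply, h, hij, if_false]
      positivity

lemma sq_le_of_eig (G : SimpleGraph V) [DecidableRel G.Adj] (hc : G.Connected) (x : V → ℝ)
    (μ : ℝ) (hx0 : x ≠ 0) (hx : ∀ i, ∑ j, G.adjMatrix ℝ i j * x j = μ * x i) :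
    μ ^ 2 ≤ 2 * (G.edgeFinset.card : ℝ) - Fintype.card V + 1 := by
  have key := aux_identity (fun i j => G.adjMatrix ℝ i j)
    (fun i j => by simp [SimpleGraph.adj_comm]) x μ hx
  rw [sum_sum_adj] at key
  have hpos : 0 < ∑ i, x i ^ 2 := by
    obtain ⟨i, hi⟩ := Function.ne_iff.mp hx0
    exact Finset.sum_pos' (fun i _ => sq_nonneg _) ⟨i, Finset.mem_univ _, by
      have : x i ≠ 0 := hi
      positivity⟩
  have h1 : 0 ≤ ∑ i, (1 / 2) * ∑ j, ∑ k, G.adjMatrix ℝ i j * G.adjMatrix ℝ i k * (x j - x k) ^ 2 :=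
    Finset.sum_nonneg fun i _ => mul_nonneg (by norm_num) <| Finset.sum_nonneg fun j _ =>
      Finset.sum_nonneg fun k _ => term1_nonneg G x i j k
  have h2 := Finset.sum_nonneg fun i (_ : i ∈ Finset.univ) =>
    Finset.sum_nonneg fun j (_ : j ∈ Finset.univ) => term2_nonneg G hc x i j
  have h3 := key ▸ add_nonneg h1 h2
  have := nonneg_of_mul_nonneg_left h3 hpos
  linarith

lemma eq_conditions (G : SimpleGraph V) [DecidableRel G.Adj] (hc : G.Connected) (x : V → ℝ)
    (μ : ℝ) (hx : ∀ i, ∑ j, G.adjMatrix ℝ i j * x j = μ * x i)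
    (hμ : μ ^ 2 = 2 * (G.edgeFinset.card : ℝ) - Fintype.card V + 1) :
    (∀ i j k, G.Adj i j → G.Adj i k → x j = x k) ∧
    (∀ i j, i ≠ j → ¬ G.Adj i j → x j ≠ 0 → G.degree i = 1) := by
  have key := aux_identity (fun i j => G.adjMatrix ℝ i j)
    (fun i j => by simp [SimpleGraph.adj_comm]) x μ hx
  rw [sum_sum_adj, ← hμ, sub_self, zero_mul] at key
  have n1' : ∀ i, 0 ≤ ∑ j, ∑ k, G.adjMatrix ℝ i j * G.adjMatrix ℝ i k * (x j - x k) ^ 2 :=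
    fun i => Finset.sum_nonneg fun j _ => Finset.sum_nonneg fun k _ => term1_nonneg G x i j k
  have n1 : ∀ i, 0 ≤ (1 / 2) * ∑ j, ∑ k, G.adjMatrix ℝ i j * G.adjMatrix ℝ i k * (x j - x k) ^ 2 :=
    fun i => mul_nonneg (by norm_num) (n1' i)
  have n2 := fun i => Finset.sum_nonneg fun j (_ : j ∈ Finset.univ) => term2_nonneg G hc x i j
  have h1 := Finset.sum_nonneg fun i (_ : i ∈ Finset.univ) => n1 i
  have h2 := Finset.sum_nonneg fun i (_ : i ∈ Finset.univ) => n2 i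
  have z1 := le_antisymm (by linarith) h1
  have z2 := le_antisymm (by linarith) h2
  constructor
  · intro i j k hj hk
    have a1 := (Finset.sum_eq_zero_iff_of_nonneg fun i _ => n1 i).1 z1 i (Finset.mem_univ _)
    have a1' : ∑ j, ∑ k, G.adjMatrix ℝ i j * G.adjMatrix ℝ i k * (x j - x k) ^ 2 = 0 := by
      linarith
    have a2 := (Finset.sum_eq_zero_iff_of_nonneg fun j _ =>
      Finset.sum_nonneg fun k _ => term1_nonneg G x i j k).1 a1' j (Finset.mem_univ _)
    have a3 := (Finset.sum_eq_zero_iff_of_nonneg fun k _ =>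
      term1_nonneg G x i j k).1 a2 k (Finset.mem_univ _)
    simp [hj, hk] at a3
    linarith
  · intro i j hij hadj hxj
    have a1 := (Finset.sum_eq_zero_iff_of_nonneg fun i _ => n2 i).1 z2 i (Finset.mem_univ _)
    have a2 := (Finset.sum_eq_zero_iff_of_nonneg fun j _ =>
      term2_nonneg G hc x i j).1 a1 j (Finset.mem_univ _)
    rw [sum_adjRow] at a2
    simp [hij, hadj, hxj] at a2
    have : (G.degree i : ℝ) = 1 := by linarith
    exact_mod_cast this

lemma closed_of_connected (G : SimpleGraph V) (hc : G.Connected) (P : V → Prop)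
    (hP : ∀ u v, G.Adj u v → P u → P v) (u : V) (hu : P u) (v : V) : P v := by
  obtain ⟨w⟩ := hc.preconnected u v
  induction w with
  | nil => exact hu
  | cons h _ ih => exact ih (hP _ _ h hu)

/-- The extremal structure: complete, or a star with centre `c`. -/
lemma structure_of_eq (G : SimpleGraph V) [DecidableRel G.Adj] (hc : G.Connected) (x : V → ℝ)
    (μ : ℝ) (hx0 : x ≠ 0) (hx : ∀ i, ∑ j, G.adjMatrix ℝ i j * x j = μ * x i)
    (hμ : μ ^ 2 = 2 * (G.edgeFinset.card : ℝ) - Fintype.card V + 1) :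
    G = ⊤ ∨ ∃ c, ∀ u v, G.Adj u v ↔ (u = c ∧ v ≠ c ∨ u ≠ c ∧ v = c) := by
  obtain ⟨hA, hB⟩ := eq_conditions G hc x μ hx hμ
  by_cases hG : G = ⊤
  · exact Or.inl hG
  right
  have hnz : ∀ v, x v ≠ 0 := by
    by_contra! hcon
    obtain ⟨v, hv⟩ := hcon
    apply hx0
    funext w
    refine closed_of_connected G hc (fun v => x v = 0) ?_ v hv w
    intro u w huw hu
    have h1 := hx u
    have h2 : ∑ j, G.adjMatrix ℝ u j * x j = ∑ j, G.adjMatrix ℝ u j * x w := by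
      refine Finset.sum_congr rfl fun j _ => ?_
      by_cases h : G.Adj u j
      · rw [hA u j w h huw]
      · simp [h]
    rw [h2, ← Finset.sum_mul, sum_adjRow, hu, mul_zero] at h1
    have : (G.degree u : ℝ) ≠ 0 := by
      have := degree_ge_one G hc u w huw.ne
      positivity
    exact (mul_eq_zero.1 h1).resolve_left this
  have hdeg : ∀ i j, i ≠ j → ¬ G.Adj i j → G.degree i = 1 := fun i j h h' => hB i j h h' (hnz j)
  have huniq : ∀ i, G.degree i = 1 → ∀ a b, G.Adj i a → G.Adj i b → a = b := by
    intro i hi a b ha hb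
    exact (SimpleGraph.degree_eq_one_iff_existsUnique_adj.1 hi).unique ha hb
  have : ∃ i j, i ≠ j ∧ ¬ G.Adj i j := by
    by_contra! h
    exact hG (by ext u v; exact ⟨fun e => by simpa using e.ne, fun e => h u v (by simpa using e)⟩)
  obtain ⟨i, j, hij, hnadj⟩ := this
  have hi := hdeg i j hij hnadj
  obtain ⟨c, hic, -⟩ := SimpleGraph.degree_eq_one_iff_existsUnique_adj.1 hi
  have hic : G.Adj i c := hic
  have hd1 : ∀ v, v ≠ c → G.degree v = 1 := by
    intro v hv
    by_cases hvi : v = i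
    · rw [hvi]; exact hi
    · exact hdeg v i hvi fun h => hv (huniq i hi _ _ h.symm hic)
  have hadj : ∀ v, v ≠ c → G.Adj v c := by
    intro v hv
    by_contra hnv
    have hdc : G.degree c = 1 := hdeg c v hv.symm fun h => hnv h.symm
    have : v = i ∨ v = c := by
      refine closed_of_connected G hc (fun v => v = i ∨ v = c) ?_ i (Or.inl rfl) v
      rintro u w huw (rfl | rfl)
      · exact Or.inr (huniq _ hi _ _ huw hic)
      · exact Or.inl (huniq _ hdc _ _ huw hic.symm)
    rcases this with rfl | rfl
    · exact hnv hic
    · exact hv rfl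
  refine ⟨c, fun u v => ⟨fun h => ?_, ?_⟩⟩
  · by_cases hu : u = c
    · exact Or.inl ⟨hu, fun hv => h.ne (hu.trans hv.symm)⟩
    · exact Or.inr ⟨hu, huniq u (hd1 u hu) _ _ h (hadj u hu)⟩
  · rintro (⟨rfl, h⟩ | ⟨h, rfl⟩)
    · exact (hadj v h).symm
    · exact hadj u h

lemma star_iff (G : SimpleGraph V) (n : ℕ) (hn : n = Fintype.card V) [Nonempty V] :
    Nonempty (G ≃g completeBipartiteGraph (Fin 1) (Fin (n - 1))) ↔
      ∃ c, ∀ u v, G.Adj u v ↔ (u = c ∧ v ≠ c ∨ u ≠ c ∧ v = c) := by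
  constructor
  · rintro ⟨e⟩
    refine ⟨e.symm (Sum.inl 0), fun u v => ?_⟩
    have hl : ∀ w, (e w).isLeft ↔ w = e.symm (Sum.inl 0) := by
      intro w
      rw [Sum.isLeft_iff]
      constructor
      · rintro ⟨y, hy⟩
        rw [Subsingleton.elim y 0] at hy
        rw [← hy]; simp
      · rintro rfl; exact ⟨0, by simp⟩
    rw [← e.map_adj_iff, completeBipartiteGraph_adj]
    simp only [Ne, ← hl]
    simp
  · rintro ⟨c, h⟩
    have hcard : Fintype.card {v : V // ¬ v = c} = Fintype.card (Fin (n - 1)) := by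
      rw [Fintype.card_subtype_compl, Fintype.card_subtype_eq]; simp [hn]
    have e2 := Fintype.equivOfCardEq hcard
    have e1 : {v : V // v = c} ≃ Fin 1 := Fintype.equivOfCardEq (by simp)
    refine ⟨⟨(Equiv.sumCompl (fun v => v = c)).symm.trans (Equiv.sumCongr e1 e2), ?_⟩⟩
    intro u v
    rw [h]
    by_cases hu : u = c <;> by_cases hv : v = c <;>
      simp [hu, hv, Equiv.sumCompl_symm_apply_of_pos, Equiv.sumCompl_symm_apply_of_neg]

end Helpers

/-- For a connected graph of order `n` and size `m`,
`ρ(G) ≤ √(2m − n + 1)`, with equality iff `G = K_n` or `G ≅ K_{1,n−1}`. -/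
theorem graphSpectralRadius_le {V : Type*} [Fintype V] [DecidableEq V]
    (G : SimpleGraph V) [DecidableRel G.Adj] (n m : ℕ)
    (hn : n = Fintype.card V) (hm : m = G.edgeFinset.card)
    (hconn : G.Connected) :
    graphSpectralRadius G ≤ Real.sqrt (2 * m - n + 1) ∧
      (graphSpectralRadius G = Real.sqrt (2 * m - n + 1) ↔
        G = ⊤ ∨ Nonempty (G ≃g completeBipartiteGraph (Fin 1) (Fin (n - 1)))) := by
  have : Nonempty V := hconn.nonempty
  have hmem : graphSpectralRadius G ∈ spectrum ℝ (G.adjMatrix ℝ) :=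
    (spec_nonempty G).csSup_mem (spec_finite G)
  have hge : ∀ μ ∈ spectrum ℝ (G.adjMatrix ℝ), μ ≤ graphSpectralRadius G :=
    fun μ hμ => le_csSup (spec_finite G).bddAbove hμ
  obtain ⟨x, hx0, hx⟩ := exists_of_mem_spec G _ hmem
  have hsq := sq_le_of_eig G hconn x _ hx0 hx
  have hle : graphSpectralRadius G ≤ Real.sqrt (2 * m - n + 1) := by
    rw [hm, hn]; exact Real.le_sqrt_of_sq_le hsq
  refine ⟨hle, ?_⟩
  rw [star_iff G n hn]
  have hn1 : 1 ≤ n := hn ▸ Fintype.card_pos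
  have hn1r : (1 : ℝ) ≤ n := by exact_mod_cast hn1
  have hdsum : ∑ i, (G.degree i : ℝ) = 2 * (m : ℝ) := by
    rw [hm, ← sum_sum_adj]; simp only [sum_adjRow]
  have htop : G = ⊤ → Real.sqrt (2 * m - n + 1) ≤ graphSpectralRadius G := by
    intro hG
    have hd : ∀ i, (G.degree i : ℝ) = n - 1 := by
      intro i
      have : G.degree i = n - 1 := by
        subst hG; rw [hn]; convert SimpleGraph.complete_graph_degree i
      rw [this]; push_cast [hn1]; rfl
    apply hge
    have h2m : 2 * (m : ℝ) - n + 1 = ((n : ℝ) - 1) ^ 2 := by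
      rw [← hdsum]; simp only [hd]; simp [← hn]; ring
    rw [h2m, Real.sqrt_sq (by linarith)]
    refine mem_spec_of G _ (fun _ => 1) (fun h => ?_) (fun i => ?_)
    · simpa using congrFun h (Classical.arbitrary V)
    · simp only [mul_one]; rw [sum_adjRow, hd]
  constructor
  · intro heq
    refine structure_of_eq G hconn x _ hx0 hx ?_
    rw [heq, hm, hn, Real.sq_sqrt (le_trans (sq_nonneg _) hsq)]
  · intro h
    refine le_antisymm hle ?_
    rcases h with h | ⟨c, hc⟩
    · exact htop h
    by_cases hs : Subsingleton V
    · exact htop (Subsingleton.elim _ _)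
    rw [not_subsingleton_iff_nontrivial] at hs
    have hdc : (G.degree c : ℝ) = n - 1 := by
      rw [← sum_adjRow]
      have : ∀ j, G.adjMatrix ℝ c j = 1 - if c = j then 1 else 0 := by
        intro j
        simp only [SimpleGraph.adjMatrix_apply, hc]
        by_cases h : c = j
        · simp [h]
        · simp [h, Ne.symm h]
      simp [-SimpleGraph.adjMatrix_apply, this, hn]
    have hrow : ∀ v, v ≠ c → ∀ y : V → ℝ, ∑ j, G.adjMatrix ℝ v j * y j = y c := by
      intro v hv y
      have : ∀ j, G.adjMatrix ℝ v j = if j = c then 1 else 0 := by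
        intro j
        simp [SimpleGraph.adjMatrix_apply, hc, hv]
      simp [-SimpleGraph.adjMatrix_apply, this]
    have hdv : ∀ v, v ≠ c → (G.degree v : ℝ) = 1 := by
      intro v hv
      have := hrow v hv (fun _ => 1)
      simp only [mul_one] at this
      rwa [sum_adjRow] at this
    have h2m : 2 * (m : ℝ) - n + 1 = n - 1 := by
      have hd : ∀ i, (G.degree i : ℝ) = 1 + if i = c then ((n : ℝ) - 2) else 0 := by
        intro i
        by_cases h : i = c
        · rw [h, hdc]; simp; ring
        · rw [hdv i h]; simp [h]
      rw [← hdsum]; simp only [hd, Finset.sum_add_distrib]; simp [← hn]; ring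
    rw [h2m]
    apply hge
    refine mem_spec_of G _ (fun v => if v = c then Real.sqrt (n - 1) else 1) (fun h => ?_)
      (fun i => ?_)
    · obtain ⟨v, hv⟩ := exists_ne c
      simpa [hv] using congrFun h v
    · by_cases hi : i = c
      · subst hi
        have : ∀ j, G.adjMatrix ℝ i j * (if j = i then Real.sqrt (n - 1) else 1) =
            G.adjMatrix ℝ i j := by
          intro j
          by_cases h : j = i
          · simp [h]
          · simp [h]
        simp only [this]
        rw [sum_adjRow, hdc, if_pos trivial, Real.mul_self_sqrt (by linarith)]
      · rw [hrow i hi]; simp [hi]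
end

section
/- Let G be a simple connected t-tough graph of order n and size m with t ∈ {1, 2, 3}, where (t = 1 and n ≥ 7) or (t = 2 and n ≥ 16) or (t = 3 and n ≥ 28). If m ≥ C(n − 2t, 2) + 3t², then G is pancyclic or bipartite. -/
open SimpleGraph

noncomputable def numComponents {V : Type*} (G : SimpleGraph V) (S : Finset V) : ℕ :=
  Nat.card (G.induce ((↑S : Set V)ᶜ)).ConnectedComponent

def IsTough {V : Type*} (t : ℝ) (G : SimpleGraph V) : Prop :=
  ∀ S : Finset V, 2 ≤ numComponents G S →
    t * (numComponents G S : ℝ) ≤ (S.card : ℝ)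

/-- A graph of order `n` is pancyclic if it has a cycle of every length `ℓ`
with `3 ≤ ℓ ≤ n`. -/
def Pancyclic {V : Type*} [Fintype V] (G : SimpleGraph V) : Prop :=
  ∀ ℓ : ℕ, 3 ≤ ℓ → ℓ ≤ Fintype.card V →
    ∃ (v : V) (c : G.Walk v v), c.IsCycle ∧ c.length = ℓ

namespace TP

set_option linter.unusedSectionVars false

variable {V : Type*} [DecidableEq V]

/-- there is a path from `a` to `b` with vertex set exactly `s`. -/
def HP (G : SimpleGraph V) (a b : V) (s : Finset V) : Prop :=
  ∃ w : G.Walk a b, w.IsPath ∧ w.support.toFinset = s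

theorem HP.single (G : SimpleGraph V) (a : V) : HP G a a {a} :=
  ⟨Walk.nil, by simp, by simp⟩

theorem HP.symm {G : SimpleGraph V} {a b : V} {s : Finset V} (h : HP G a b s) : HP G b a s := by
  obtain ⟨w, hw, hs⟩ := h
  exact ⟨w.reverse, hw.reverse, by simp [hs]⟩

theorem HP.join {G : SimpleGraph V} {a b c d : V} {s s' : Finset V} (h : HP G a b s)
    (hbc : G.Adj b c) (h' : HP G c d s') (hd : Disjoint s s') : HP G a d (s ∪ s') := by
  obtain ⟨w, hw, rfl⟩ := h
  obtain ⟨w', hw', rfl⟩ := h'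
  have hsup : (w.append (Walk.cons hbc w')).support = w.support ++ w'.support := by
    rw [Walk.support_append]; simp
  refine ⟨w.append (Walk.cons hbc w'), ?_, ?_⟩
  · rw [Walk.isPath_def, hsup, List.nodup_append]
    refine ⟨hw.support_nodup, hw'.support_nodup, ?_⟩
    intro x hx y hy hxy
    subst hxy
    exact (Finset.disjoint_left.mp hd) (by simpa using hx) (by simpa using hy)
  · rw [hsup]; simp

theorem HP.cycle {G : SimpleGraph V} {a b : V} {s : Finset V} (h : HP G a b s)
    (hab : G.Adj a b) (hs : 3 ≤ s.card) :
    ∃ (v : V) (c : G.Walk v v), c.IsCycle ∧ c.length = s.card := by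
  obtain ⟨w, hw, rfl⟩ := h
  have hc : w.support.toFinset.card = w.length + 1 := by
    rw [List.toFinset_card_of_nodup hw.support_nodup, Walk.length_support]
  refine ⟨b, Walk.cons hab.symm w, ?_, ?_⟩
  · rw [Walk.cons_isCycle_iff]
    refine ⟨hw, ?_⟩
    intro hmem
    rw [hc] at hs
    cases w with
    | nil => simp at hs
    | cons h q =>
      rw [Walk.edges_cons, List.mem_cons] at hmem
      rw [Walk.cons_isPath_iff] at hw
      rcases hmem with hmem | hmem
      · rw [Sym2.eq_iff] at hmem
        rcases hmem with ⟨h1, h2⟩ | ⟨h1, h2⟩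
        · subst h1; exact hab.ne rfl
        · subst h1
          have := hw.1
          have hq : q = Walk.nil := by simpa using hw.1
          subst hq
          simp at hs
      · exact hw.2 (Walk.snd_mem_support_of_mem_edges _ hmem)
  · rw [hc]; simp

theorem HP.fn {G : SimpleGraph V} (p : ℕ → V) (i j : ℕ) (hij : i ≤ j)
    (hadj : ∀ k, i ≤ k → k < j → G.Adj (p k) (p (k+1)))
    (hinj : ∀ x y, i ≤ x → x ≤ j → i ≤ y → y ≤ j → p x = p y → x = y) :
    HP G (p i) (p j) ((Finset.Icc i j).image p) := by
  induction j, hij using Nat.le_induction with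
  | base => simpa using HP.single G (p i)
  | succ j hij ih =>
    have h1 := ih (fun k h1 h2 => hadj k h1 (by omega))
      (fun x y h1 h2 h3 h4 => hinj x y h1 (by omega) h3 (by omega))
    have h2 := h1.join (hadj j hij (by omega)) (HP.single G (p (j+1))) (by
      rw [Finset.disjoint_singleton_right, Finset.mem_image]
      rintro ⟨x, hx, hxe⟩
      rw [Finset.mem_Icc] at hx
      have := hinj x (j+1) hx.1 (by omega) (by omega) le_rfl hxe
      omega)
    convert h2 using 1
    have hI : Finset.Icc i (j+1) = Finset.Icc i j ∪ {j+1} := by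
      ext x
      simp only [Finset.mem_Icc, Finset.mem_union, Finset.mem_singleton]
      omega
    rw [hI, Finset.image_union, Finset.image_singleton]

variable [Fintype V]

def Ham (G : SimpleGraph V) : Prop := ∃ a b, HP G a b Finset.univ ∧ G.Adj a b

/-- `p` enumerates all vertices by `0..N` as a path. -/
structure PathFn (G : SimpleGraph V) (p : ℕ → V) (N : ℕ) : Prop where
  adj : ∀ k, k < N → G.Adj (p k) (p (k+1))
  inj : ∀ x y, x ≤ N → y ≤ N → p x = p y → x = y
  surj : ∀ v, ∃ x, x ≤ N ∧ p x = v

theorem HP.toFn {G : SimpleGraph V} {a b : V} (h : HP G a b Finset.univ) :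
    ∃ p : ℕ → V, PathFn G p (Fintype.card V - 1) ∧ p 0 = a ∧ p (Fintype.card V - 1) = b := by
  obtain ⟨w, hw, hs⟩ := h
  have hc : w.support.toFinset.card = w.length + 1 := by
    rw [List.toFinset_card_of_nodup hw.support_nodup, Walk.length_support]
  rw [hs, Finset.card_univ] at hc
  have hl : Fintype.card V - 1 = w.length := by omega
  rw [hl]
  refine ⟨w.getVert, ⟨?_, ?_, ?_⟩, by simp, by simp⟩
  · intro k hk
    exact w.adj_getVert_succ hk
  · intro x y hx hy hxy
    exact hw.getVert_injOn hx hy hxy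
  · intro v
    have : v ∈ w.support := by
      rw [← List.mem_toFinset, hs]; simp
    rw [Walk.mem_support_iff_exists_getVert] at this
    obtain ⟨n, h1, h2⟩ := this
    exact ⟨n, h2, h1⟩

theorem PathFn.card {G : SimpleGraph V} {p : ℕ → V} {N : ℕ} (h : PathFn G p N) :
    Fintype.card V = N + 1 := by
  have : (Finset.univ : Finset V) = (Finset.range (N+1)).image p := by
    ext v
    simp only [Finset.mem_univ, Finset.mem_image, Finset.mem_range, true_iff]
    obtain ⟨x, h1, h2⟩ := h.surj v
    exact ⟨x, by omega, h2⟩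
  rw [← Finset.card_univ, this, Finset.card_image_of_injOn]
  · simp
  · intro x hx y hy hxy
    simp at hx hy
    exact h.inj x y (by omega) (by omega) hxy

theorem PathFn.sub {G : SimpleGraph V} {p : ℕ → V} {N : ℕ} (h : PathFn G p N) (i j : ℕ)
    (hij : i ≤ j) (hj : j ≤ N) : HP G (p i) (p j) ((Finset.Icc i j).image p) :=
  HP.fn p i j hij (fun k _ h2 => h.adj k (by omega))
    (fun x y _ h2 _ h4 => h.inj x y (by omega) (by omega))

theorem disj_im {p : ℕ → V} {N : ℕ} (inj : ∀ x y, x ≤ N → y ≤ N → p x = p y → x = y)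
    {a b c d : ℕ} (hb : b ≤ N) (hd : d ≤ N) (h : b < c ∨ d < a) :
    Disjoint ((Finset.Icc a b).image p) ((Finset.Icc c d).image p) := by
  rw [Finset.disjoint_left]
  intro x hx hy
  simp only [Finset.mem_image, Finset.mem_Icc] at hx hy
  obtain ⟨i, hi, rfl⟩ := hx
  obtain ⟨j, hj, hij⟩ := hy
  have := inj j i (by omega) (by omega) hij
  omega

/-- adding one edge to make a Hamilton cycle gives a Hamilton path -/
theorem path_of_add {G : SimpleGraph V} {u v : V} (huv : u ≠ v) (hn : 3 ≤ Fintype.card V)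
    (hnot : ¬ Ham G) (hH : Ham (G ⊔ edge u v)) : HP G u v Finset.univ := by
  obtain ⟨a, b, hP, hab⟩ := hH
  obtain ⟨p, hp, h0, h1⟩ := hP.toFn
  set N := Fintype.card V - 1 with hN
  have key : ∀ x y, (G ⊔ edge u v).Adj x y → ¬ G.Adj x y → (x = u ∧ y = v) ∨ (x = v ∧ y = u) := by
    intro x y h h'
    rw [sup_adj, edge_adj] at h
    tauto
  suffices h : ∃ x y, HP G x y Finset.univ ∧ (G ⊔ edge u v).Adj x y by
    obtain ⟨x, y, h2, h3⟩ := h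
    rcases key x y h3 (fun h => hnot ⟨x, y, h2, h⟩) with ⟨rfl, rfl⟩ | ⟨rfl, rfl⟩
    · exact h2
    · exact h2.symm
  by_cases hall : ∀ k, k < N → G.Adj (p k) (p (k+1))
  · have hp' : PathFn G p N := ⟨hall, hp.inj, hp.surj⟩
    refine ⟨a, b, ?_, hab⟩
    have := hp'.sub 0 N (by omega) le_rfl
    rw [h0, h1] at this
    convert this
    ext x
    simp only [Finset.mem_univ, Finset.mem_image, Finset.mem_Icc, true_iff]
    obtain ⟨x, h1, h2⟩ := hp.surj x
    exact ⟨x, by omega, h2⟩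
  · push Not at hall
    obtain ⟨z, hz, hzn⟩ := hall
    have e1 := key _ _ (hp.adj z hz) hzn
    have hadj : ∀ k, k < N → k ≠ z → G.Adj (p k) (p (k+1)) := by
      intro k hk hkz
      by_contra hh
      have e2 := key _ _ (hp.adj k hk) hh
      have i1 := hp.inj k z (by omega) (by omega)
      have i2 := hp.inj k (z+1) (by omega) (by omega)
      have i3 := hp.inj (k+1) z (by omega) (by omega)
      rcases e1 with ⟨a1, a2⟩ | ⟨a1, a2⟩ <;> rcases e2 with ⟨b1, b2⟩ | ⟨b1, b2⟩
      · exact hkz (i1 (by rw [a1, b1]))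
      · have q1 := i2 (by rw [a2, b1])
        have q2 := i3 (by rw [a1, b2])
        omega
      · have q1 := i2 (by rw [a2, b1])
        have q2 := i3 (by rw [a1, b2])
        omega
      · exact hkz (i1 (by rw [a1, b1]))
    have hba : G.Adj (p N) (p 0) := by
      by_contra hh
      have e2 := key (p N) (p 0) (by rw [h0, h1]; exact hab.symm) hh
      have i1 := hp.inj N z (by omega) (by omega)
      have i2 := hp.inj N (z+1) (by omega) (by omega)
      have i3 := hp.inj 0 z (by omega) (by omega)
      rcases e1 with ⟨a1, a2⟩ | ⟨a1, a2⟩ <;> rcases e2 with ⟨b1, b2⟩ | ⟨b1, b2⟩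
      · have := i1 (by rw [a1, b1])
        omega
      · have q1 := i2 (by rw [a2, b1])
        have q2 := i3 (by rw [a1, b2])
        omega
      · have q1 := i2 (by rw [a2, b1])
        have q2 := i3 (by rw [a1, b2])
        omega
      · have := i1 (by rw [a1, b1])
        omega
    have A := HP.fn (G := G) p (z+1) N (by omega) (fun k q1 q2 => hadj k q2 (by omega))
      (fun x y _ q2 _ q4 => hp.inj x y (by omega) (by omega))
    have B := HP.fn (G := G) p 0 z (by omega) (fun k q1 q2 => hadj k (by omega) (by omega))
      (fun x y _ q2 _ q4 => hp.inj x y (by omega) (by omega))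
    have C := A.join hba B (disj_im hp.inj (by omega) (by omega) (by omega))
    refine ⟨p (z+1), p z, ?_, (hp.adj z hz).symm⟩
    convert C
    ext x
    simp only [Finset.mem_univ, Finset.mem_union, Finset.mem_image, Finset.mem_Icc, true_iff]
    obtain ⟨x, h1, h2⟩ := hp.surj x
    by_cases hx : x ≤ z
    · right; exact ⟨x, by omega, h2⟩
    · left; exact ⟨x, by omega, h2⟩

end TP

namespace TP

set_option linter.unusedSectionVars false

variable {V : Type*} [DecidableEq V] [Fintype V]

theorem PathFn.degree_eq {G : SimpleGraph V} [DecidableRel G.Adj] {p : ℕ → V} {N : ℕ}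
    (h : PathFn G p N) (w : V) :
    G.degree w = ((Finset.range (N+1)).filter (fun x => G.Adj w (p x))).card := by
  rw [← card_neighborFinset_eq_degree]
  symm
  apply Finset.card_bij (fun x _ => p x)
  · intro x hx
    simp at hx ⊢
    exact hx.2
  · intro x hx y hy hxy
    simp at hx hy
    exact h.inj x y (by omega) (by omega) hxy
  · intro y hy
    obtain ⟨x, h1, h2⟩ := h.surj y
    refine ⟨x, ?_, h2⟩
    simp at hy ⊢
    exact ⟨by omega, by rw [h2]; exact hy⟩

theorem PathFn.sum_eq {G : SimpleGraph V} {p : ℕ → V} {N : ℕ}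
    (h : PathFn G p N) (f : V → ℕ) : ∑ v, f v = ∑ x ∈ Finset.range (N+1), f (p x) := by
  symm
  apply Finset.sum_bij (fun x _ => p x)
  · simp
  · intro x hx y hy hxy
    simp at hx hy
    exact h.inj x y (by omega) (by omega) hxy
  · intro y _
    obtain ⟨x, h1, h2⟩ := h.surj y
    exact ⟨x, by simp; omega, h2⟩
  · simp

theorem card_im {p : ℕ → V} {N : ℕ} (inj : ∀ x y, x ≤ N → y ≤ N → p x = p y → x = y)
    {a b : ℕ} (hb : b ≤ N) : ((Finset.Icc a b).image p).card = b + 1 - a := by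
  rw [Finset.card_image_of_injOn]
  · simp
  · intro x hx y hy hxy
    simp at hx hy
    exact inj x y (by omega) (by omega) hxy

theorem bondy_core {G : SimpleGraph V} [DecidableRel G.Adj] {p : ℕ → V} {N : ℕ}
    (h : PathFn G p N) (hN : 2 ≤ N) (hadj : G.Adj (p 0) (p N))
    (hdeg : N + 2 ≤ G.degree (p 0) + G.degree (p N)) (ℓ : ℕ) (h3 : 3 ≤ ℓ) (hl : ℓ ≤ N + 1) :
    ∃ (v : V) (c : G.Walk v v), c.IsCycle ∧ c.length = ℓ := by
  rcases Nat.lt_or_ge N ℓ with hlN | hlN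
  · have h1 := h.sub 0 N (by omega) le_rfl
    have h2 := h1.cycle hadj (by rw [card_im h.inj le_rfl]; omega)
    rw [card_im h.inj le_rfl] at h2
    have : ℓ = N + 1 - 0 := by omega
    rw [this]; exact h2
  set X := (Finset.Icc 1 (N-1)).filter (fun x => G.Adj (p 0) (p x)) with hX
  set Y := (Finset.Icc 1 (N-1)).filter (fun x => G.Adj (p N) (p x)) with hY
  have cX : G.degree (p 0) = X.card + 1 := by
    rw [h.degree_eq (p 0)]
    have : (Finset.range (N+1)).filter (fun x => G.Adj (p 0) (p x)) = insert N X := by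
      ext x
      simp only [hX, Finset.mem_filter, Finset.mem_range, Finset.mem_insert, Finset.mem_Icc]
      constructor
      · rintro ⟨a, b⟩
        have : x ≠ 0 := by rintro rfl; exact b.ne rfl
        by_cases hx : x = N
        · exact Or.inl hx
        · exact Or.inr ⟨by omega, b⟩
      · rintro (rfl | ⟨a, b⟩)
        · exact ⟨by omega, hadj⟩
        · exact ⟨by omega, b⟩
    rw [this, Finset.card_insert_of_notMem]
    simp [hX]; omega
  have cY : G.degree (p N) = Y.card + 1 := by
    rw [h.degree_eq (p N)]
    have : (Finset.range (N+1)).filter (fun x => G.Adj (p N) (p x)) = insert 0 Y := by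
      ext x
      simp only [hY, Finset.mem_filter, Finset.mem_range, Finset.mem_insert, Finset.mem_Icc]
      constructor
      · rintro ⟨a, b⟩
        have : x ≠ N := by rintro rfl; exact b.ne rfl
        by_cases hx : x = 0
        · exact Or.inl hx
        · exact Or.inr ⟨by omega, b⟩
      · rintro (rfl | ⟨a, b⟩)
        · exact ⟨by omega, hadj.symm⟩
        · exact ⟨by omega, b⟩
    rw [this, Finset.card_insert_of_notMem]
    simp [hY]
  set φ : ℕ → ℕ := fun x => if x + ℓ - 3 ≤ N - 1 then x + ℓ - 3 else x + ℓ - 2 - N with hφ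
  have cφ : (X.image φ).card = X.card := by
    apply Finset.card_image_of_injOn
    intro x hx y hy hxy
    simp only [hX, Finset.coe_filter, Finset.mem_Icc, Set.mem_ofPred_eq] at hx hy
    simp only [hφ] at hxy
    split_ifs at hxy <;> omega
  have hnd : ¬ Disjoint (X.image φ) Y := by
    intro hd
    have h1 := Finset.card_union_of_disjoint hd
    have h2 : (X.image φ ∪ Y) ⊆ Finset.Icc 1 (N-1) := by
      intro x hx
      rw [Finset.mem_union] at hx
      rcases hx with hx | hx
      · rw [Finset.mem_image] at hx
        obtain ⟨y, hy, rfl⟩ := hx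
        simp only [hX, Finset.mem_filter, Finset.mem_Icc] at hy
        simp only [hφ, Finset.mem_Icc]
        split_ifs <;> omega
      · exact (Finset.mem_filter.mp hx).1
    have h3 := Finset.card_le_card h2
    simp at h3
    omega
  rw [Finset.not_disjoint_iff] at hnd
  obtain ⟨y, hy1, hy2⟩ := hnd
  rw [Finset.mem_image] at hy1
  obtain ⟨x, hx, hxy⟩ := hy1
  simp only [hX, hY, Finset.mem_filter, Finset.mem_Icc] at hx hy2
  simp only [hφ] at hxy
  split_ifs at hxy with hc
  · have A := h.sub 0 0 le_rfl (by omega)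
    have B := h.sub x y (by omega) (by omega)
    have C := h.sub N N le_rfl le_rfl
    have D1 := disj_im h.inj (a := 0) (b := 0) (c := x) (d := y) (by omega) (by omega) (by omega)
    have AB := A.join hx.2 B D1
    have D2 : Disjoint ((Finset.Icc 0 0).image p ∪ (Finset.Icc x y).image p)
        ((Finset.Icc N N).image p) := by
      rw [Finset.disjoint_union_left]
      exact ⟨disj_im h.inj (by omega) (by omega) (by omega),
        disj_im h.inj (by omega) (by omega) (by omega)⟩
    have ABC := AB.join hy2.2.symm C D2
    have hcard : (((Finset.Icc 0 0).image p ∪ (Finset.Icc x y).image p) ∪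
        ((Finset.Icc N N).image p)).card = ℓ := by
      rw [Finset.card_union_of_disjoint D2, Finset.card_union_of_disjoint D1,
        card_im h.inj (by omega), card_im h.inj (by omega), card_im h.inj (by omega)]
      omega
    have := ABC.cycle hadj (by omega)
    rwa [hcard] at this
  · have A := h.sub 0 y (by omega) (by omega)
    have B := (h.sub x N (by omega) le_rfl).symm
    have D := disj_im h.inj (a := 0) (b := y) (c := x) (d := N) (by omega) (by omega) (by omega)
    have AB := A.join hy2.2.symm B D
    have hcard : ((Finset.Icc 0 y).image p ∪ (Finset.Icc x N).image p).card = ℓ := by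
      rw [Finset.card_union_of_disjoint D, card_im h.inj (by omega), card_im h.inj (by omega)]
      omega
    have := AB.cycle hx.2 (by omega)
    rwa [hcard] at this

theorem univ_im2 {G : SimpleGraph V} {p : ℕ → V} {N : ℕ} (h : PathFn G p N) (z : ℕ) :
    (Finset.Icc (z+1) N).image p ∪ (Finset.Icc 0 z).image p = Finset.univ := by
  ext x
  simp only [Finset.mem_univ, Finset.mem_union, Finset.mem_image, Finset.mem_Icc, iff_true]
  obtain ⟨x, h1, h2⟩ := h.surj x
  by_cases hx : x ≤ z
  · right; exact ⟨x, by omega, h2⟩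
  · left; exact ⟨x, by omega, h2⟩

theorem bondy {G : SimpleGraph V} [DecidableRel G.Adj] (hn : 3 ≤ Fintype.card V)
    (hH : Ham G) (hm : Fintype.card V ^ 2 < 4 * G.edgeFinset.card) : Pancyclic G := by
  obtain ⟨a, b, hP, hab⟩ := hH
  obtain ⟨p, hp, h0, h1⟩ := hP.toFn
  have hcard := hp.card
  set N := Fintype.card V - 1 with hN
  rw [← h0, ← h1] at hab
  intro ℓ h3 hl
  rw [hcard] at hl
  by_cases hend : N + 2 ≤ G.degree (p 0) + G.degree (p N)
  · exact bondy_core hp (by omega) hab hend ℓ h3 hl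
  by_cases hmid : ∃ z, z < N ∧ N + 2 ≤ G.degree (p z) + G.degree (p (z+1))
  · obtain ⟨z, hz, hd⟩ := hmid
    have A := hp.sub (z+1) N (by omega) le_rfl
    have B := hp.sub 0 z (by omega) (by omega)
    have C := A.join hab.symm B (disj_im hp.inj (by omega) (by omega) (by omega))
    rw [univ_im2 hp z] at C
    obtain ⟨q, hq, q0, q1⟩ := C.toFn
    rw [← hN] at q1 hq
    refine bondy_core hq (by omega) ?_ ?_ ℓ h3 hl
    · rw [q0, q1]; exact (hp.adj z hz).symm
    · rw [q0, q1]; omega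
  · exfalso
    push Not at hmid
    have s1 := hp.sum_eq (fun v => G.degree v)
    rw [sum_degrees_eq_twice_card_edges] at s1
    have s2 := s1
    rw [Finset.sum_range_succ] at s1
    rw [Finset.sum_range_succ'] at s2
    have s3 : ∑ x ∈ Finset.range N, (G.degree (p x) + G.degree (p (x+1))) ≤
        ∑ x ∈ Finset.range N, (N + 1) :=
      Finset.sum_le_sum (fun x hx => by
        have := hmid x (by simpa using hx)
        omega)
    rw [Finset.sum_add_distrib] at s3
    simp at s3
    rw [hcard] at hm
    nlinarith

end TP

namespace TP

set_option linter.unusedSectionVars false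

variable {V : Type*} [DecidableEq V] [Fintype V]

theorem tough_image {G : SimpleGraph V} {t : ℕ} (ht : IsTough (t : ℝ) G) {ι : Type*}
    [DecidableEq ι] (f : V → ι) (S : Finset V)
    (hf : ∀ x y, x ∉ S → y ∉ S → G.Adj x y → f x = f y)
    (h2 : 2 ≤ (Sᶜ.image f).card) : t * (Sᶜ.image f).card ≤ S.card := by
  have key : (Sᶜ.image f).card ≤ numComponents G S := by
    unfold numComponents
    set H := G.induce ((↑S : Set V)ᶜ)
    have hw : ∀ (x y : ((↑S : Set V)ᶜ : Set V)) (w : H.Walk x y), f x = f y := by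
      intro x y w
      induction w with
      | nil => rfl
      | @cons a b c h _ ih => exact (hf _ _ (fun hs => a.2 (Finset.mem_coe.mpr hs))
          (fun hs => b.2 (Finset.mem_coe.mpr hs))
          (by simpa [H] using h)).trans ih
    let F : H.ConnectedComponent → ι := fun C =>
      C.lift (fun x : ((↑S : Set V)ᶜ : Set V) => f x.1) (fun x y w _ => hw x y w)
    have : (↑(Sᶜ.image f) : Set ι) ⊆ Set.range F := by
      intro i hi
      simp only [Finset.coe_image, Set.mem_image] at hi
      obtain ⟨x, hx, rfl⟩ := hi
      exact ⟨H.connectedComponentMk ⟨x, by simpa using hx⟩, rfl⟩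
    have hfin : Finite H.ConnectedComponent := inferInstance
    calc (Sᶜ.image f).card = (↑(Sᶜ.image f) : Set ι).ncard := (Set.ncard_coe_finset _).symm
      _ ≤ (Set.range F).ncard := Set.ncard_le_ncard this (Set.finite_range F)
      _ ≤ Nat.card H.ConnectedComponent := by
        rw [← Set.image_univ, ← Set.ncard_univ]
        exact Set.ncard_image_le
  have h := ht S (by omega)
  have h' : t * numComponents G S ≤ S.card := by exact_mod_cast h
  exact (Nat.mul_le_mul_left t key).trans h'

theorem tough_mono {G H : SimpleGraph V} {t : ℕ} (hGH : G ≤ H) (ht : IsTough (t : ℝ) G) :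
    IsTough (t : ℝ) H := by
  intro S hS
  have key : numComponents H S ≤ numComponents G S := by
    unfold numComponents
    have hle : G.induce ((↑S : Set V)ᶜ) ≤ H.induce ((↑S : Set V)ᶜ) := fun x y hxy => hGH hxy
    refine Nat.card_le_card_of_surjective (ConnectedComponent.map (Hom.ofLE hle)) ?_
    intro C
    induction C using ConnectedComponent.ind with
    | h v => exact ⟨(G.induce ((↑S : Set V)ᶜ)).connectedComponentMk v, rfl⟩
  refine le_trans ?_ (ht S (hS.trans key))
  exact_mod_cast Nat.mul_le_mul_left t key

/-- independent sets in tough graphs -/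
theorem tough_indep {G : SimpleGraph V} {t : ℕ} (ht : IsTough (t : ℝ) G) (I : Finset V)
    (hI : ∀ x ∈ I, ∀ y ∈ I, ¬ G.Adj x y) (h2 : 2 ≤ I.card) :
    (t + 1) * I.card ≤ Fintype.card V := by
  have h := tough_image ht (fun x : V => x) Iᶜ (by
    intro x y hx hy hxy
    simp at hx hy
    exact absurd hxy (hI x hx y hy))
  simp only [compl_compl, Finset.image_id'] at h
  have := h h2
  rw [Finset.card_compl] at this
  have h3 := Finset.card_le_univ I
  have : t * I.card + I.card ≤ Fintype.card V := by omega
  linarith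

/-- isolating an independent set `W` by deleting `S`, with something else left. -/
theorem tough_isolate {G : SimpleGraph V} {t : ℕ} (ht : IsTough (t : ℝ) G) (W S : Finset V)
    (hWS : Disjoint W S) (hN : ∀ x ∈ W, ∀ y, G.Adj x y → y ∈ S) (hW : W.Nonempty)
    (v : V) (hvW : v ∉ W) (hvS : v ∉ S) : t * (W.card + 1) ≤ S.card := by
  set f : V → Option V := fun x => if x ∈ W then some x else none with hf
  have him : insert none (W.image some) ⊆ Sᶜ.image f := by
    intro x hx
    rw [Finset.mem_insert] at hx
    rcases hx with rfl | hx
    · rw [Finset.mem_image]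
      exact ⟨v, by simpa using hvS, by simp [hf, hvW]⟩
    · rw [Finset.mem_image] at hx ⊢
      obtain ⟨y, hy, rfl⟩ := hx
      exact ⟨y, by simpa using Finset.disjoint_left.mp hWS hy, by simp [hf, hy]⟩
  have hc : (insert none (W.image some) : Finset (Option V)).card = W.card + 1 := by
    rw [Finset.card_insert_of_notMem (by simp),
      Finset.card_image_of_injective _ (Option.some_injective V)]
  have hle := Finset.card_le_card him
  rw [hc] at hle
  have hpos := hW.card_pos
  have := tough_image ht f S (by
    intro x y hx hy hxy
    have h1 : x ∉ W := fun h => hy (hN x h y hxy)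
    have h2 : y ∉ W := fun h => hx (hN y h x hxy.symm)
    simp [hf, h1, h2]) (by omega)
  exact (Nat.mul_le_mul_left t hle).trans this

theorem min_deg {G : SimpleGraph V} [DecidableRel G.Adj] {t : ℕ} (ht : IsTough (t : ℝ) G)
    {u v : V} (huv : u ≠ v) (hn : ¬ G.Adj u v) : 2 * t ≤ G.degree u := by
  have := tough_isolate ht {u} (G.neighborFinset u) (by simp) (by simp) (by simp) v
    (by simpa using huv.symm) (by simpa using hn)
  simp at this
  omega

/-- a cycle missing exactly `w` : successors of neighbours -/
theorem cyc_succ_w {G : SimpleGraph V} (hH : ¬ Ham G) {c : ℕ → V} {M : ℕ} {w : V}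
    (adj : ∀ k, k < M → G.Adj (c k) (c (k+1))) (cl : G.Adj (c M) (c 0))
    (inj : ∀ x y, x ≤ M → y ≤ M → c x = c y → x = y)
    (hw : ∀ x, x ≤ M → c x ≠ w) (surj : ∀ v, v = w ∨ ∃ x, x ≤ M ∧ c x = v)
    (z : ℕ) (hz : z ≤ M) (h1 : G.Adj w (c z)) : ¬ G.Adj w (c (if z = M then 0 else z + 1)) := by
  intro h2
  apply hH
  have sub : ∀ i j, i ≤ j → j ≤ M → HP G (c i) (c j) ((Finset.Icc i j).image c) := fun i j h1 h2 =>
    HP.fn c i j h1 (fun k _ h => adj k (by omega)) (fun x y _ h2 _ h4 => inj x y (by omega) (by omega))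
  have dw : ∀ i j, j ≤ M → Disjoint ((Finset.Icc i j).image c) {w} := by
    intro i j hj
    rw [Finset.disjoint_singleton_right, Finset.mem_image]
    rintro ⟨x, hx, hxe⟩
    rw [Finset.mem_Icc] at hx
    exact hw x (by omega) hxe
  split_ifs at h2 with hzM
  · have A := (sub 0 M (by omega) le_rfl).join (by rw [← hzM]; exact h1.symm) (HP.single G w)
      (dw _ _ le_rfl)
    refine ⟨_, _, ?_, h2.symm⟩
    convert A
    ext v
    simp only [Finset.mem_univ, Finset.mem_union, Finset.mem_image, Finset.mem_Icc,
      Finset.mem_singleton, true_iff]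
    rcases surj v with h | ⟨x, hx, h⟩
    · exact Or.inr h
    · exact Or.inl ⟨x, by omega, h⟩
  · have A := ((sub (z+1) M (by omega) le_rfl).join cl (sub 0 z (by omega) hz)
      (disj_im inj (by omega) (by omega) (by omega))).join h1.symm (HP.single G w)
      (by rw [Finset.disjoint_union_left]; exact ⟨dw _ _ le_rfl, dw _ _ hz⟩)
    refine ⟨_, _, ?_, h2.symm⟩
    convert A
    ext v
    simp only [Finset.mem_univ, Finset.mem_union, Finset.mem_image, Finset.mem_Icc,
      Finset.mem_singleton, true_iff]
    rcases surj v with h | ⟨x, hx, h⟩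
    · exact Or.inr h
    · by_cases hxz : x ≤ z
      · exact Or.inl (Or.inr ⟨x, by omega, h⟩)
      · exact Or.inl (Or.inl ⟨x, by omega, h⟩)

theorem cyc_succ_succ {G : SimpleGraph V} (hH : ¬ Ham G) {c : ℕ → V} {M : ℕ} {w : V}
    (adj : ∀ k, k < M → G.Adj (c k) (c (k+1))) (cl : G.Adj (c M) (c 0))
    (inj : ∀ x y, x ≤ M → y ≤ M → c x = c y → x = y)
    (hw : ∀ x, x ≤ M → c x ≠ w) (surj : ∀ v, v = w ∨ ∃ x, x ≤ M ∧ c x = v)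
    (z z' : ℕ) (hzz : z < z') (hz : z' ≤ M) (h1 : G.Adj w (c z)) (h1' : G.Adj w (c z')) :
    ¬ G.Adj (c (z + 1)) (c (if z' = M then 0 else z' + 1)) := by
  intro h2
  apply hH
  have sub : ∀ i j, i ≤ j → j ≤ M → HP G (c i) (c j) ((Finset.Icc i j).image c) := fun i j h1 h2 =>
    HP.fn c i j h1 (fun k _ h => adj k (by omega)) (fun x y _ h2 _ h4 => inj x y (by omega) (by omega))
  have dw : ∀ i j, j ≤ M → Disjoint ((Finset.Icc i j).image c) {w} := by
    intro i j hj
    rw [Finset.disjoint_singleton_right, Finset.mem_image]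
    rintro ⟨x, hx, hxe⟩
    rw [Finset.mem_Icc] at hx
    exact hw x (by omega) hxe
  split_ifs at h2 with hzM
  · subst hzM
    have A := ((sub 0 z (by omega) (by omega)).symm.join h2.symm (sub (z+1) z' (by omega) le_rfl)
      (disj_im inj (by omega) (by omega) (by omega))).join h1'.symm (HP.single G w)
      (by rw [Finset.disjoint_union_left]; exact ⟨dw _ _ (by omega), dw _ _ (by omega)⟩)
    refine ⟨_, _, ?_, h1.symm⟩
    convert A
    ext v
    simp only [Finset.mem_univ, Finset.mem_union, Finset.mem_image, Finset.mem_Icc,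
      Finset.mem_singleton, true_iff]
    rcases surj v with h | ⟨x, hx, h⟩
    · exact Or.inr h
    · by_cases hxz : x ≤ z
      · exact Or.inl (Or.inl ⟨x, by omega, h⟩)
      · exact Or.inl (Or.inr ⟨x, by omega, h⟩)
  · have A := (((sub 0 z (by omega) (by omega)).symm.join cl.symm
      (sub (z'+1) M (by omega) le_rfl).symm
      (disj_im inj (by omega) (by omega) (by omega))).join h2.symm (sub (z+1) z' (by omega) hz)
      (by
        rw [Finset.disjoint_union_left]
        exact ⟨disj_im inj (by omega) (by omega) (by omega),
          disj_im inj (by omega) (by omega) (by omega)⟩)).join h1'.symm (HP.single G w)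
      (by
        rw [Finset.disjoint_union_left, Finset.disjoint_union_left]
        exact ⟨⟨dw _ _ (by omega), dw _ _ (by omega)⟩, dw _ _ (by omega)⟩)
    refine ⟨_, _, ?_, h1.symm⟩
    convert A
    ext v
    simp only [Finset.mem_univ, Finset.mem_union, Finset.mem_image, Finset.mem_Icc,
      Finset.mem_singleton, true_iff]
    rcases surj v with h | ⟨x, hx, h⟩
    · exact Or.inr h
    · by_cases hxz : x ≤ z
      · exact Or.inl (Or.inl (Or.inl ⟨x, by omega, h⟩))
      · by_cases hxz' : x ≤ z'
        · exact Or.inl (Or.inr ⟨x, by omega, h⟩)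
        · exact Or.inl (Or.inl (Or.inr ⟨x, by omega, h⟩))

theorem cyc_indep {G : SimpleGraph V} [DecidableRel G.Adj] (hH : ¬ Ham G) {c : ℕ → V} {M : ℕ}
    {w : V} (adj : ∀ k, k < M → G.Adj (c k) (c (k+1))) (cl : G.Adj (c M) (c 0))
    (inj : ∀ x y, x ≤ M → y ≤ M → c x = c y → x = y)
    (hw : ∀ x, x ≤ M → c x ≠ w) (surj : ∀ v, v = w ∨ ∃ x, x ≤ M ∧ c x = v) :
    ∃ I : Finset V, w ∈ I ∧ (∀ x ∈ I, ∀ y ∈ I, ¬ G.Adj x y) ∧ I.card = G.degree w + 1 ∧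
      ∀ z, z ≤ M → G.Adj w (c z) → c (if z = M then 0 else z + 1) ∈ I := by
  set Z := (Finset.range (M+1)).filter (fun z => G.Adj w (c z)) with hZ
  set σ : ℕ → ℕ := fun z => if z = M then 0 else z + 1 with hσ
  have hmem : ∀ z, z ∈ Z ↔ z ≤ M ∧ G.Adj w (c z) := by
    intro z; simp [hZ]
  have hσle : ∀ z, z ≤ M → σ z ≤ M := by
    intro z hz; simp only [hσ]; split_ifs <;> omega
  have hcw : w ∉ Z.image (fun z => c (σ z)) := by
    rw [Finset.mem_image]
    rintro ⟨z, hz, h⟩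
    exact hw _ (hσle z ((hmem z).1 hz).1) h
  have hdeg : Z.card = G.degree w := by
    rw [← card_neighborFinset_eq_degree]
    apply Finset.card_bij (fun x _ => c x)
    · intro x hx
      simpa using ((hmem x).1 hx).2
    · intro x hx y hy hxy
      exact inj x y ((hmem x).1 hx).1 ((hmem y).1 hy).1 hxy
    · intro y hy
      simp at hy
      rcases surj y with rfl | ⟨x, h1, h2⟩
      · exact absurd hy (G.loopless.irrefl _)
      · exact ⟨x, (hmem x).2 ⟨h1, by rw [h2]; exact hy⟩, h2⟩
  have hww : ∀ z ∈ Z, ¬ G.Adj w (c (σ z)) := fun z hz =>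
    cyc_succ_w hH adj cl inj hw surj z ((hmem z).1 hz).1 ((hmem z).1 hz).2
  have hlt : ∀ z ∈ Z, ∀ z' ∈ Z, z < z' → ¬ G.Adj (c (σ z)) (c (σ z')) := by
    intro z hz z' hz' hlt
    have h1 := (hmem z).1 hz
    have h2 := (hmem z').1 hz'
    have h3 := cyc_succ_succ hH adj cl inj hw surj z z' hlt h2.1 h1.2 h2.2
    have h4 : σ z = z + 1 := by simp only [hσ]; rw [if_neg (by omega)]
    rw [h4]; exact h3
  refine ⟨insert w (Z.image (fun z => c (σ z))), Finset.mem_insert_self _ _, ?_, ?_, ?_⟩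
  · intro x hx y hy hxy
    rw [Finset.mem_insert, Finset.mem_image] at hx hy
    rcases hx with rfl | ⟨z, hz, rfl⟩ <;> rcases hy with rfl | ⟨z', hz', rfl⟩
    · exact hxy.ne rfl
    · exact hww z' hz' hxy
    · exact hww z hz hxy.symm
    · rcases lt_trichotomy z z' with h | h | h
      · exact hlt z hz z' hz' h hxy
      · subst h; exact hxy.ne rfl
      · exact hlt z' hz' z hz h hxy.symm
  · rw [Finset.card_insert_of_notMem hcw, Finset.card_image_of_injOn, hdeg]
    intro x hx y hy hxy
    have h1 := ((hmem x).1 hx).1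
    have h2 := ((hmem y).1 hy).1
    have := inj _ _ (hσle x h1) (hσle y h2) hxy
    simp only [hσ] at this
    split_ifs at this <;> omega
  · intro z hz h
    exact Finset.mem_insert_of_mem (Finset.mem_image_of_mem _ ((hmem z).2 ⟨hz, h⟩))

/-- the crossing argument -/
theorem no_cross {G : SimpleGraph V} (hH : ¬ Ham G) {p : ℕ → V} {N : ℕ} (h : PathFn G p N)
    (k : ℕ) (hk : k < N) (h1 : G.Adj (p 0) (p (k+1))) : ¬ G.Adj (p N) (p k) := by
  intro h2
  apply hH
  have A := (h.sub 0 k (by omega) (by omega)).join h2.symm (h.sub (k+1) N (by omega) le_rfl).symm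
    (disj_im h.inj (by omega) (by omega) (by omega))
  refine ⟨_, _, ?_, h1⟩
  convert A using 1
  rw [Finset.union_comm, univ_im2 h k]

theorem genuine {G : SimpleGraph V} [DecidableRel G.Adj] (hH : ¬ Ham G) {p : ℕ → V} {N : ℕ}
    (h : PathFn G p N) (k : ℕ) (hk1 : 1 ≤ k) (hkN : k < N) (hv : G.Adj (p N) (p (k-1)))
    (hu : G.Adj (p 0) (p (k+1))) :
    ∃ I : Finset V, p k ∈ I ∧ p 0 ∈ I ∧ p N ∈ I ∧ (∀ x ∈ I, ∀ y ∈ I, ¬ G.Adj x y) ∧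
      I.card = G.degree (p k) + 1 ∧
      ∀ y, y ≤ N → G.Adj (p k) (p y) → (y + 1 = k ∨ y = k + 1 ∨ (y + 1 < k ∧ p (y+1) ∈ I) ∨
        (k + 1 < y ∧ p (y-1) ∈ I)) := by
  set c : ℕ → V := fun z => p (if z < k then z else N - (z - k)) with hc
  have cs : ∀ z, z < k → c z = p z := fun z hz => by simp [hc, hz]
  have cl : ∀ z, k ≤ z → c z = p (N - (z - k)) := fun z hz => by simp [hc, Nat.not_lt.mpr hz]
  obtain ⟨I, h1, h2, h3, h4⟩ := cyc_indep (G := G) hH (c := c) (M := N - 1) (w := p k) (by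
      intro z hz
      rcases lt_trichotomy (z+1) k with h' | h' | h'
      · rw [cs z (by omega), cs _ h']; exact h.adj z (by omega)
      · rw [cs z (by omega), cl _ (by omega), h']
        have : z = k - 1 := by omega
        rw [this]
        simpa using hv.symm
      · rw [cl z (by omega), cl (z+1) (by omega)]
        have := h.adj (N - (z + 1 - k)) (by omega)
        rw [show N - (z + 1 - k) + 1 = N - (z - k) by omega] at this
        exact this.symm)
    (by
      rw [cl (N-1) (by omega), cs 0 (by omega), show N - (N - 1 - k) = k + 1 by omega]
      exact hu.symm)
    (by
      intro x y hx hy hxy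
      have := h.inj _ _ (by split_ifs <;> omega) (by split_ifs <;> omega) hxy
      split_ifs at this <;> omega)
    (by
      intro x hx hxy
      have := h.inj _ _ (by split_ifs <;> omega) (by omega) hxy
      split_ifs at this <;> omega)
    (by
      intro v
      obtain ⟨x, hx, rfl⟩ := h.surj v
      rcases lt_trichotomy x k with h' | h' | h'
      · exact Or.inr ⟨x, by omega, cs x h'⟩
      · exact Or.inl (by rw [h'])
      · refine Or.inr ⟨N - x + k, by omega, ?_⟩
        rw [cl _ (by omega)]
        congr 1
        omega)
  refine ⟨I, h1, ?_, ?_, h2, h3, ?_⟩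
  · have := h4 (N-1) le_rfl (by
      rw [cl (N-1) (by omega), show N - (N - 1 - k) = k + 1 by omega]
      exact h.adj k hkN)
    rw [if_pos rfl, cs 0 (by omega)] at this
    exact this
  · have := h4 (k-1) (by omega) (by
      rw [cs _ (by omega)]
      have := h.adj (k-1) (by omega)
      rw [show k - 1 + 1 = k by omega] at this
      exact this.symm)
    rw [if_neg (by omega), cl _ (by omega), show N - (k - 1 + 1 - k) = N by omega] at this
    exact this
  · intro y hy hadj
    have hyk : y ≠ k := by rintro rfl; exact hadj.ne rfl
    rcases Nat.lt_or_ge y k with h' | h'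
    · by_cases hy1 : y + 1 = k
      · exact Or.inl hy1
      · have := h4 y (by omega) (by rw [cs y h']; exact hadj)
        rw [if_neg (by omega), cs _ (by omega)] at this
        exact Or.inr (Or.inr (Or.inl ⟨by omega, this⟩))
    · by_cases hy1 : y = k + 1
      · exact Or.inr (Or.inl hy1)
      · have := h4 (N - y + k) (by omega) (by
          rw [cl _ (by omega), show N - (N - y + k - k) = y by omega]; exact hadj)
        rw [if_neg (by omega), cl _ (by omega), show N - (N - y + k + 1 - k) = y - 1 by omega] at this
        exact Or.inr (Or.inr (Or.inr ⟨by omega, this⟩))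

end TP

namespace TP

set_option linter.unusedSectionVars false

variable {V : Type*} [DecidableEq V] [Fintype V]

/-- The data of an edge-maximal non-hamiltonian tough graph with an extremal non-adjacent pair. -/
structure Cfg (G : SimpleGraph V) [DecidableRel G.Adj] (t : ℕ) (u v : V) : Prop where
  tough : IsTough (t : ℝ) G
  nh : ¬ Ham G
  ne : u ≠ v
  nadj : ¬ G.Adj u v
  path : HP G u v Finset.univ
  le : G.degree u ≤ G.degree v
  sum : ∀ x y, x ≠ y → ¬ G.Adj x y → G.degree x + G.degree y ≤ G.degree u + G.degree v

/-- common neighbours -/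
def Cc (G : SimpleGraph V) [DecidableRel G.Adj] (u v : V) : Finset V :=
  Finset.univ.filter (fun x => G.Adj u x ∧ G.Adj v x)

/-- private neighbours -/
def Uu (G : SimpleGraph V) [DecidableRel G.Adj] (u v : V) : Finset V :=
  Finset.univ.filter (fun x => G.Adj u x ∧ ¬ G.Adj v x)

/-- non-neighbours -/
def Ww (G : SimpleGraph V) [DecidableRel G.Adj] (u v : V) : Finset V :=
  Finset.univ.filter (fun x => x ≠ u ∧ x ≠ v ∧ ¬ G.Adj u x ∧ ¬ G.Adj v x)

variable {G : SimpleGraph V} [DecidableRel G.Adj]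

theorem mem_Cc {u v x : V} : x ∈ Cc G u v ↔ G.Adj u x ∧ G.Adj v x := by simp [Cc]
theorem mem_Uu {u v x : V} : x ∈ Uu G u v ↔ G.Adj u x ∧ ¬ G.Adj v x := by simp [Uu]
theorem mem_Ww {u v x : V} :
    x ∈ Ww G u v ↔ x ≠ u ∧ x ≠ v ∧ ¬ G.Adj u x ∧ ¬ G.Adj v x := by simp [Ww]

theorem sum_split {u v : V} (hne : u ≠ v) (hn : ¬ G.Adj u v) (f : V → ℕ) :
    ∑ x, f x = f u + f v + ∑ x ∈ Uu G u v, f x + ∑ x ∈ Uu G v u, f x + ∑ x ∈ Cc G u v, f x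
      + ∑ x ∈ Ww G u v, f x := by
  have hu : f u = ∑ x, if x = u then f x else 0 := by simp
  have hv : f v = ∑ x, if x = v then f x else 0 := by simp
  rw [hu, hv]
  simp only [Uu, Cc, Ww, Finset.sum_filter]
  simp only [← Finset.sum_add_distrib]
  apply Finset.sum_congr rfl
  intro x _
  have hn' : ¬ G.Adj v u := fun h => hn h.symm
  by_cases h1 : x = u
  · subst h1; simp [hne, hn']
  by_cases h2 : x = v
  · subst h2; simp [hn, hne.symm]
  by_cases h3 : G.Adj u x <;> by_cases h4 : G.Adj v x <;> simp [h1, h2, h3, h4]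

theorem degree_split (u v : V) : G.degree u = (Uu G u v).card + (Cc G u v).card := by
  rw [← card_neighborFinset_eq_degree, ← Finset.card_union_of_disjoint]
  · congr 1
    ext x
    simp only [mem_neighborFinset, Finset.mem_union, mem_Uu, mem_Cc]
    tauto
  · rw [Finset.disjoint_left]
    intro x
    rw [mem_Uu, mem_Cc]
    tauto

theorem Cc_comm (u v : V) : Cc G u v = Cc G v u := by
  ext x; rw [mem_Cc, mem_Cc, and_comm]

theorem card_split {u v : V} (hne : u ≠ v) (hn : ¬ G.Adj u v) :
    (Ww G u v).card + 2 + G.degree u + G.degree v = Fintype.card V + (Cc G u v).card := by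
  have h := sum_split hne hn (fun _ => 1)
  simp only [Finset.sum_const, smul_eq_mul, mul_one, Finset.card_univ] at h
  have h1 := degree_split (G := G) u v
  have h2 := degree_split (G := G) v u
  rw [Cc_comm] at h2
  omega

theorem count_gen {p : ℕ → V} {N : ℕ} (hH : ¬ Ham G) (h : PathFn G p N) (hN : 1 ≤ N)
    (hn : ¬ G.Adj (p 0) (p N)) :
    G.degree (p 0) + G.degree (p N) ≤ N ∧
    ∃ Γ : Finset V, (∀ w ∈ Γ, ∃ k, 1 ≤ k ∧ k < N ∧ p k = w ∧ G.Adj (p N) (p (k-1)) ∧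
      G.Adj (p 0) (p (k+1))) ∧
      (Cc G (p 0) (p N)).card + G.degree (p 0) + G.degree (p N) ≤ Γ.card + 1 + N := by
  set A := (Finset.range N).filter (fun k => G.Adj (p 0) (p (k+1))) with hA
  set B := (Finset.range N).filter (fun k => G.Adj (p N) (p k)) with hB
  set X := (Finset.range N).filter (fun k => G.Adj (p 0) (p k)) with hX
  set Ci := (Finset.range N).filter (fun k => G.Adj (p 0) (p k) ∧ G.Adj (p N) (p k)) with hC
  set Gi := (Finset.range N).filter (fun k => 1 ≤ k ∧ G.Adj (p N) (p (k-1)) ∧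
    G.Adj (p 0) (p (k+1))) with hG
  have dAB : Disjoint A B := by
    rw [Finset.disjoint_left]
    intro k hk hk'
    simp only [hA, hB, Finset.mem_filter, Finset.mem_range] at hk hk'
    exact no_cross hH h k hk.1 hk.2 hk'.2
  have cX : X.card = G.degree (p 0) := by
    rw [h.degree_eq]
    congr 1
    ext k
    simp only [hX, Finset.mem_filter, Finset.mem_range]
    constructor
    · rintro ⟨h1, h2⟩; exact ⟨by omega, h2⟩
    · rintro ⟨h1, h2⟩
      refine ⟨?_, h2⟩
      have : k ≠ N := by rintro rfl; exact hn h2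
      omega
  have cB : B.card = G.degree (p N) := by
    rw [h.degree_eq]
    congr 1
    ext k
    simp only [hB, Finset.mem_filter, Finset.mem_range]
    constructor
    · rintro ⟨h1, h2⟩; exact ⟨by omega, h2⟩
    · rintro ⟨h1, h2⟩
      refine ⟨?_, h2⟩
      have : k ≠ N := by rintro rfl; exact h2.ne rfl
      omega
  have cA : A.card = G.degree (p 0) := by
    rw [h.degree_eq]
    apply Finset.card_bij (fun k _ => k + 1)
    · intro k hk
      simp only [hA, Finset.mem_filter, Finset.mem_range] at hk ⊢
      exact ⟨by omega, hk.2⟩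
    · intro a _ b _ hab; omega
    · intro b hb
      simp only [Finset.mem_filter, Finset.mem_range] at hb
      have : b ≠ 0 := by rintro rfl; exact hb.2.ne rfl
      refine ⟨b - 1, ?_, by omega⟩
      simp only [hA, Finset.mem_filter, Finset.mem_range]
      rw [show b - 1 + 1 = b by omega]
      exact ⟨by omega, hb.2⟩
  have cC : Ci.card = (Cc G (p 0) (p N)).card := by
    apply Finset.card_bij (fun k _ => p k)
    · intro k hk
      simp only [hC, Finset.mem_filter] at hk
      rw [mem_Cc]; exact hk.2
    · intro a ha b hb hab
      simp only [hC, Finset.mem_filter, Finset.mem_range] at ha hb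
      exact h.inj a b (by omega) (by omega) hab
    · intro x hx
      obtain ⟨k, hk, rfl⟩ := h.surj x
      rw [mem_Cc] at hx
      refine ⟨k, ?_, rfl⟩
      simp only [hC, Finset.mem_filter, Finset.mem_range]
      refine ⟨?_, hx⟩
      have : k ≠ N := by rintro rfl; exact hx.2.ne rfl
      omega
  have sAB : A ∪ B ⊆ Finset.range N :=
    Finset.union_subset (Finset.filter_subset _ _) (Finset.filter_subset _ _)
  have cAB : (A ∪ B).card = G.degree (p 0) + G.degree (p N) := by
    rw [Finset.card_union_of_disjoint dAB, cA, cB]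
  have hle : G.degree (p 0) + G.degree (p N) ≤ N := by
    have := Finset.card_le_card sAB
    rw [Finset.card_range] at this
    omega
  refine ⟨hle, Gi.image p, ?_, ?_⟩
  · intro w hw
    rw [Finset.mem_image] at hw
    obtain ⟨k, hk, rfl⟩ := hw
    simp only [hG, Finset.mem_filter, Finset.mem_range] at hk
    exact ⟨k, hk.2.1, hk.1, rfl, hk.2.2.1, hk.2.2.2⟩
  · rw [Finset.card_image_of_injOn (by
      intro a ha b hb hab
      simp only [hG, Finset.coe_filter, Set.mem_setOf_eq, Finset.mem_range] at ha hb
      exact h.inj a b (by omega) (by omega) hab)]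
    set O := Finset.range N \ (A ∪ B) with hO
    have cO : O.card + (G.degree (p 0) + G.degree (p N)) = N := by
      have := Finset.card_sdiff_add_card_eq_card sAB
      rw [Finset.card_range, cAB] at this
      exact this
    have h1 : Ci ⊆ X \ A := by
      intro k hk
      simp only [hC, Finset.mem_filter] at hk
      rw [Finset.mem_sdiff]
      refine ⟨Finset.mem_filter.2 ⟨hk.1, hk.2.1⟩, fun hkA => ?_⟩
      exact Finset.disjoint_left.1 dAB hkA (Finset.mem_filter.2 ⟨hk.1, hk.2.2⟩)
    have h2 : (X \ A).card = (A \ X).card := Finset.card_sdiff_comm (by rw [cX, cA])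
    have h3 : A \ X ⊆ ({0} ∪ Gi) ∪ O.image (· + 1) := by
      intro k hk
      rw [Finset.mem_sdiff] at hk
      obtain ⟨hkA, hkX⟩ := hk
      simp only [Finset.mem_union, Finset.mem_singleton, Finset.mem_image]
      by_cases hk0 : k = 0
      · exact Or.inl (Or.inl hk0)
      have hkA' := hkA
      simp only [hA, Finset.mem_filter, Finset.mem_range] at hkA'
      by_cases hB' : k - 1 ∈ B
      · refine Or.inl (Or.inr ?_)
        simp only [hB, Finset.mem_filter, Finset.mem_range] at hB'
        simp only [hG, Finset.mem_filter, Finset.mem_range]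
        exact ⟨hkA'.1, by omega, hB'.2, hkA'.2⟩
      · refine Or.inr ⟨k - 1, ?_, by omega⟩
        rw [hO, Finset.mem_sdiff, Finset.mem_union, Finset.mem_range]
        refine ⟨by omega, ?_⟩
        rintro (h' | h')
        · simp only [hA, Finset.mem_filter, Finset.mem_range] at h'
          rw [show k - 1 + 1 = k by omega] at h'
          exact hkX (Finset.mem_filter.2 ⟨Finset.mem_range.2 hkA'.1, h'.2⟩)
        · exact hB' h'
    have h4 := Finset.card_le_card h1
    have h5 := Finset.card_le_card h3
    have h6 := Finset.card_union_le ({0} ∪ Gi) (O.image (· + 1))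
    have h7 := Finset.card_union_le {0} Gi
    have h8 : (O.image (· + 1)).card ≤ O.card := Finset.card_image_le
    rw [Finset.card_singleton] at h7
    omega

theorem Cfg.two_t {t : ℕ} {u v : V} (c : Cfg G t u v) : 2 * t ≤ G.degree u :=
  min_deg c.tough c.ne c.nadj

theorem Cfg.deg_U {t : ℕ} {u v : V} (c : Cfg G t u v) : ∀ x ∈ Uu G u v, G.degree x ≤ G.degree u := by
  intro x hx
  rw [mem_Uu] at hx
  have := c.sum x v (by rintro rfl; exact c.nadj hx.1) (fun h => hx.2 h.symm)
  omega

theorem Cfg.deg_V {t : ℕ} {u v : V} (c : Cfg G t u v) : ∀ x ∈ Uu G v u, G.degree x ≤ G.degree v := by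
  intro x hx
  rw [mem_Uu] at hx
  have := c.sum x u (by rintro rfl; exact c.nadj hx.1.symm) (fun h => hx.2 h.symm)
  omega

theorem Cfg.deg_W {t : ℕ} {u v : V} (c : Cfg G t u v) : ∀ x ∈ Ww G u v, G.degree x ≤ G.degree u := by
  intro x hx
  rw [mem_Ww] at hx
  have := c.sum x v hx.2.1 (fun h => hx.2.2.2 h.symm)
  omega

theorem deg_le (x : V) : G.degree x ≤ Fintype.card V - 1 := by
  have := G.degree_lt_card_verts x
  omega

/-- genuine vertices -/
theorem Cfg.gen {t : ℕ} {u v : V} (c : Cfg G t u v) :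
    G.degree u + G.degree v + 1 ≤ Fintype.card V ∧
    ∃ Γ ⊆ Ww G u v, (Cc G u v).card + G.degree u + G.degree v ≤ Γ.card + Fintype.card V ∧
      (∀ w ∈ Γ, (t + 1) * (G.degree w + 1) ≤ Fintype.card V ∧
        G.degree w ≤ (Ww G u v).card + 1 ) ∧
      ∃ L R : V → V, ∀ w ∈ Γ, G.Adj v (L w) ∧ G.Adj u (R w) ∧
        ((Γ = Ww G u v) → ∀ y, G.Adj w y → ∃ x ∈ Γ, y = L x ∨ y = R x) := by
  obtain ⟨p, hp, h0, hN⟩ := c.path.toFn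
  set N := Fintype.card V - 1 with hNdef
  have hcard := hp.card
  have hN1 : 1 ≤ N := by
    rcases Nat.eq_zero_or_pos N with h | h
    · rw [h] at hN; exact absurd (h0.symm.trans hN) c.ne
    · exact h
  obtain ⟨hle, Γ, hΓ, hc⟩ := count_gen c.nh hp hN1 (by rw [h0, hN]; exact c.nadj)
  rw [h0, hN] at hle hc
  have hI : ∀ w ∈ Γ, ∃ I : Finset V, w ∈ I ∧ u ∈ I ∧ v ∈ I ∧ (∀ x ∈ I, ∀ y ∈ I, ¬ G.Adj x y) ∧
      I.card = G.degree w + 1 ∧ ∃ k, 1 ≤ k ∧ k < N ∧ p k = w ∧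
      G.Adj v (p (k-1)) ∧ G.Adj u (p (k+1)) ∧
      ∀ y, y ≤ N → G.Adj (p k) (p y) → (y + 1 = k ∨ y = k + 1 ∨ (y + 1 < k ∧ p (y+1) ∈ I) ∨
        (k + 1 < y ∧ p (y-1) ∈ I)) := by
    intro w hw
    obtain ⟨k, hk1, hk2, rfl, h1, h2⟩ := hΓ w hw
    obtain ⟨I, a1, a2, a3, a4, a5, a6⟩ := genuine c.nh hp k hk1 hk2 h1 h2
    rw [h0] at a2 h2
    rw [hN] at a3 h1
    exact ⟨I, a1, a2, a3, a4, a5, k, hk1, hk2, rfl, h1, h2, a6⟩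
  have hIW : ∀ I : Finset V, u ∈ I → v ∈ I → (∀ x ∈ I, ∀ y ∈ I, ¬ G.Adj x y) →
      ∀ x ∈ I, x ≠ u → x ≠ v → x ∈ Ww G u v := by
    intro I hu hv hI x hx hxu hxv
    rw [mem_Ww]
    exact ⟨hxu, hxv, hI u hu x hx, hI v hv x hx⟩
  have hsub : Γ ⊆ Ww G u v := by
    intro w hw
    obtain ⟨I, a1, a2, a3, a4, a5, k, hk1, hk2, rfl, h1, h2, -⟩ := hI w hw
    refine hIW I a2 a3 a4 _ a1 ?_ ?_
    · intro h; rw [← h0] at h; have := hp.inj _ _ (by omega) (by omega) h; omega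
    · intro h; rw [← hN] at h; have := hp.inj _ _ (by omega) (by omega) h; omega
  refine ⟨by omega, Γ, hsub, by omega, ?_, ?_⟩
  · intro w hw
    obtain ⟨I, a1, a2, a3, a4, a5, -⟩ := hI w hw
    constructor
    · rw [← a5]
      apply tough_indep c.tough I a4
      exact Finset.one_lt_card.2 ⟨u, a2, v, a3, c.ne⟩
    · have : I ⊆ insert u (insert v (Ww G u v)) := by
        intro x hx
        rw [Finset.mem_insert, Finset.mem_insert]
        by_cases h1 : x = u
        · exact Or.inl h1
        by_cases h2 : x = v
        · exact Or.inr (Or.inl h2)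
        · exact Or.inr (Or.inr (hIW I a2 a3 a4 x hx h1 h2))
      have h1 := Finset.card_le_card this
      have h2 := Finset.card_insert_le u (insert v (Ww G u v))
      have h3 := Finset.card_insert_le v (Ww G u v)
      omega
  · have hex : ∀ w : V, ∃ k, k ≤ N ∧ p k = w := hp.surj
    choose q hq hpq using hex
    refine ⟨fun w => p (q w - 1), fun w => p (q w + 1), ?_⟩
    intro w hw
    obtain ⟨I, a1, a2, a3, a4, a5, k, hk1, hk2, hkw, h1, h2, h3⟩ := hI w hw
    have hqk : ∀ k w, k ≤ N → p k = w → q w = k := fun k w hk hkw =>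
      hp.inj _ _ (hq w) hk ((hpq w).trans hkw.symm)
    have e := hqk k w (by omega) hkw
    simp only [e]
    refine ⟨h1, h2, ?_⟩
    intro hΓW y hy
    obtain ⟨z, hz, rfl⟩ := hp.surj y
    rcases h3 z hz (by rw [hkw]; exact hy) with h' | h' | ⟨h', h''⟩ | ⟨h', h''⟩
    · exact ⟨w, hw, Or.inl (by rw [e]; congr 1; omega)⟩
    · exact ⟨w, hw, Or.inr (by rw [e]; congr 1)⟩
    · refine ⟨p (z+1), ?_, Or.inl ?_⟩
      · rw [hΓW]
        refine hIW I a2 a3 a4 _ h'' ?_ ?_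
        · intro h; rw [← h0] at h; have := hp.inj _ _ (by omega) (by omega) h; omega
        · intro h; rw [← hN] at h; have := hp.inj _ _ (by omega) (by omega) h; omega
      · rw [hqk (z+1) _ (by omega) rfl]; congr 1
    · refine ⟨p (z-1), ?_, Or.inr ?_⟩
      · rw [hΓW]
        refine hIW I a2 a3 a4 _ h'' ?_ ?_
        · intro h; rw [← h0] at h; have := hp.inj _ _ (by omega) (by omega) h; omega
        · intro h; rw [← hN] at h; have := hp.inj _ _ (by omega) (by omega) h; omega
      · rw [hqk (z-1) _ (by omega) rfl]; congr 1; omega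

end TP

namespace TP

set_option linter.unusedSectionVars false

theorem sum_tight {ι : Type*} [DecidableEq ι] (s : Finset ι) (f : ι → ℕ) (M : ℕ)
    (h : ∀ x ∈ s, f x ≤ M) (hs : s.card * M ≤ ∑ x ∈ s, f x) : ∀ x ∈ s, f x = M := by
  intro x hx
  have h1 : f x + ∑ y ∈ s.erase x, f y = ∑ y ∈ s, f y := Finset.add_sum_erase s f hx
  have h2 : ∑ y ∈ s.erase x, f y ≤ (s.erase x).card • M := Finset.sum_le_card_nsmul (s.erase x) f M
    (fun y hy => h y (Finset.mem_of_mem_erase hy))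
  rw [smul_eq_mul, Finset.card_erase_of_mem hx] at h2
  have h3 := h x hx
  obtain ⟨k, hk⟩ : ∃ k, s.card = k + 1 := ⟨s.card - 1, by
    have := Finset.card_pos.2 ⟨x, hx⟩; omega⟩
  rw [hk] at hs h2
  have : (k + 1) * M = k * M + M := by ring
  simp only [Nat.add_sub_cancel] at h2
  omega

theorem sum_bd {ι : Type*} (s : Finset ι) (f : ι → ℕ) (M : ℕ)
    (h : ∀ x ∈ s, f x ≤ M) : ∑ x ∈ s, f x ≤ s.card * M := by
  simpa using Finset.sum_le_card_nsmul s f M h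

/-- arithmetic for the generic bound -/
theorem num_bd {n i j r a b w γ s D : ℕ} (hi : i = a + r) (hj : j = b + r)
    (hw : w + 2 + i + j = n + r) (hγ : γ ≤ w) (hγ2 : r + i + j ≤ γ + n) (hs : s ≤ i)
    (hg : i + j + 2 ≤ n)
    (hD : D ≤ i + j + a * i + b * j + r * (n - 1) + (w - γ) * i + γ * (i - s)) :
    D + (2 * i + j - n) * s ≤ j * (j + 1) + 2 * i * (n - 1 - j) := by
  obtain ⟨c, rfl⟩ : ∃ c, w = γ + c := ⟨w - γ, by omega⟩
  obtain ⟨e, he⟩ : ∃ e, i = s + e := ⟨i - s, by omega⟩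
  obtain ⟨g, hg'⟩ : ∃ g, n = i + j + 1 + g := ⟨n - 1 - i - j, by omega⟩
  have h1 : n - 1 = i + j + g := by omega
  have h2 : n - 1 - j = i + g := by omega
  have h3 : i - s = e := by omega
  have h4 : γ + c - γ = c := by omega
  rw [h1, h3, h4] at hD
  rw [h2]
  have hgr : r ≤ γ + 1 + g := by omega
  have hwr : γ + c + 1 = r + g := by omega
  rcases Nat.lt_or_ge (2 * i + j) n with hlt | hge
  · rw [show 2 * i + j - n = 0 by omega]
    zify at *
    nlinarith [mul_nonneg (Int.natCast_nonneg a) (Int.natCast_nonneg (i+g)),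
      mul_nonneg (Int.natCast_nonneg γ) (Int.natCast_nonneg s)]
  · obtain ⟨x, hx⟩ : ∃ x, i = x + 1 + g := ⟨i - 1 - g, by omega⟩
    rw [show 2 * i + j - n = x by omega]
    zify at *
    have e1 : (c : ℤ) = r + g - 1 - γ := by linarith
    have e2 : (a : ℤ) = i - r := by linarith
    have e3 : (b : ℤ) = j - r := by linarith
    have e4 : (e : ℤ) = i - s := by linarith
    have p1 : 0 ≤ ((γ : ℤ) + 1 + g - r) * s := mul_nonneg (by linarith) (by positivity)
    have p2 : 0 ≤ (a : ℤ) * (e + g) := by positivity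
    rw [e1, e2, e3, e4] at hD
    rw [e2, e4] at p2
    have e5 : (x : ℤ) = i - 1 - g := by linarith
    rw [e5]
    nlinarith

theorem num_big {n i j t : ℕ} (h2 : 2 * t ≤ i) (hij : i ≤ j) (hg : i + j + 2 ≤ n)
    (ht : (t = 2 ∧ 23 ≤ n) ∨ (t = 3 ∧ 36 ≤ n) ∨ (t = 1 ∧ 9 ≤ n)) :
    j * (j + 1) + 2 * i * (n - 1 - j) < (n - 2 * t) * (n - 2 * t - 1) + 6 * t ^ 2 := by
  obtain ⟨g, hg'⟩ : ∃ g, n = i + j + 2 + g := ⟨n - 2 - i - j, by omega⟩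
  obtain ⟨y, hy⟩ : ∃ y, i = 2 * t + y := ⟨i - 2 * t, by omega⟩
  obtain ⟨z, hz⟩ : ∃ z, j = i + z := ⟨j - i, by omega⟩
  have e1 : n - 1 - j = i + g + 1 := by omega
  have e2 : n - 2 * t = y + j + 2 + g := by omega
  have e3 : y + j + 2 + g - 1 = y + j + 1 + g := by omega
  rw [e1, e2, e3]
  subst hz
  subst hy
  zify
  have := mul_nonneg (Int.natCast_nonneg g) (Int.natCast_nonneg z)
  have := mul_nonneg (Int.natCast_nonneg g) (Int.natCast_nonneg y)
  have := mul_nonneg (Int.natCast_nonneg y) (Int.natCast_nonneg z)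
  have := mul_nonneg (Int.natCast_nonneg y) (Int.natCast_nonneg y)
  have := mul_nonneg (Int.natCast_nonneg g) (Int.natCast_nonneg g)
  rcases ht with ⟨rfl, h⟩ | ⟨rfl, h⟩ | ⟨rfl, h⟩
  · zify at h hg'
    have hh := mul_nonneg (Int.natCast_nonneg y) (sub_nonneg.2 h)
    rw [hg'] at h hh
    push_cast at h hh ⊢
    nlinarith
  · zify at h hg'
    have hh := mul_nonneg (Int.natCast_nonneg y) (sub_nonneg.2 h)
    rw [hg'] at h hh
    push_cast at h hh ⊢
    nlinarith
  · zify at h hg'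
    have hh := mul_nonneg (Int.natCast_nonneg y) (sub_nonneg.2 h)
    rw [hg'] at h hh
    push_cast at h hh ⊢
    nlinarith

theorem num_small2 : ∀ n ∈ Finset.Ico 16 23, ∀ j ∈ Finset.range 23, ∀ i ∈ Finset.Icc 4 j, i + j + 2 ≤ n →
    j * (j + 1) + 2 * i * (n - 1 - j) <
      (n - 4) * (n - 5) + 24 + (2 * i + j - n) * (i + 1 - n / 3) := by
  decide +kernel

theorem num_small3 : ∀ n ∈ Finset.Ico 28 36, ∀ j ∈ Finset.range 36, ∀ i ∈ Finset.Icc 6 j, i + j + 2 ≤ n →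
    j * (j + 1) + 2 * i * (n - 1 - j) <
      (n - 6) * (n - 7) + 54 + (2 * i + j - n) * (i + 1 - n / 4) := by
  decide +kernel

end TP

namespace TP

set_option linter.unusedSectionVars false

variable {V : Type*} [DecidableEq V] [Fintype V]
variable {G : SimpleGraph V} [DecidableRel G.Adj]

theorem univ_of_deg {x : V} (h : G.degree x + 1 = Fintype.card V) : ∀ y, y ≠ x → G.Adj x y := by
  intro y hy
  have hs : G.neighborFinset x ⊆ Finset.univ.erase x := by
    intro z hz
    rw [mem_neighborFinset] at hz
    exact Finset.mem_erase.2 ⟨hz.ne', Finset.mem_univ _⟩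
  have := Finset.eq_of_subset_of_card_le hs (by
    rw [Finset.card_erase_of_mem (Finset.mem_univ _), Finset.card_univ,
      card_neighborFinset_eq_degree]; omega)
  have hy' : y ∈ G.neighborFinset x := by
    rw [this]; exact Finset.mem_erase.2 ⟨hy, Finset.mem_univ _⟩
  simpa using hy'

/-- a set inside the neighbourhood of full size is the neighbourhood -/
theorem nbr_eq {x : V} {S : Finset V} (hS : ∀ y ∈ S, G.Adj x y) (hc : G.degree x ≤ S.card) :
    ∀ y, G.Adj x y → y ∈ S := by
  intro y hy
  have hs : S ⊆ G.neighborFinset x := fun z hz => by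
    rw [mem_neighborFinset]; exact hS z hz
  have := Finset.eq_of_subset_of_card_le hs (by rw [card_neighborFinset_eq_degree]; exact hc)
  rw [this, mem_neighborFinset]; exact hy

/-- Case of a positive gap, `t ≥ 2`, and `t = 1` with large order. -/
theorem Cfg.gap_pos {t : ℕ} {u v : V} (c : Cfg G t u v) {n : ℕ} (hn : Fintype.card V = n)
    (ht : (t = 1 ∧ 7 ≤ n) ∨ (t = 2 ∧ 16 ≤ n) ∨ (t = 3 ∧ 28 ≤ n))
    (hD : (n - 2 * t) * (n - 2 * t - 1) + 6 * t ^ 2 ≤ ∑ x, G.degree x)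
    (hg : G.degree u + G.degree v + 2 ≤ n) : False := by
  have h2t := c.two_t
  have hij := c.le
  obtain ⟨-, Γ, hΓW, hΓc, hΓd, -⟩ := c.gen
  have hcs := card_split c.ne c.nadj
  have hsum := sum_split c.ne c.nadj (fun x => G.degree x)
  have hi := degree_split (G := G) u v
  have hj := degree_split (G := G) v u
  rw [Cc_comm] at hj
  have sU := sum_bd _ _ _ c.deg_U
  have sV := sum_bd _ _ _ c.deg_V
  have sC := sum_bd (Cc G u v) (fun x => G.degree x) (n - 1) (fun x _ => hn ▸ deg_le x)
  rw [hn] at hcs hΓc hΓd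
  -- the bound
  have main : ∀ s, s ≤ G.degree u → (∀ w ∈ Γ, G.degree w ≤ G.degree u - s) →
      (∑ x, G.degree x) + (2 * G.degree u + G.degree v - n) * s ≤
        G.degree v * (G.degree v + 1) + 2 * G.degree u * (n - 1 - G.degree v) := by
    intro s hs hw
    have hW : ∑ x ∈ Ww G u v, G.degree x = ∑ x ∈ Ww G u v \ Γ, G.degree x + ∑ x ∈ Γ, G.degree x :=
      (Finset.sum_sdiff hΓW).symm
    have h1 := sum_bd (Ww G u v \ Γ) (fun x => G.degree x) (G.degree u)
      (fun x hx => c.deg_W x (Finset.mem_sdiff.1 hx).1)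
    have h2 := sum_bd Γ (fun x => G.degree x) (G.degree u - s) hw
    rw [Finset.card_sdiff_of_subset hΓW] at h1
    refine num_bd hi hj hcs (Finset.card_le_card hΓW) hΓc hs hg ?_
    omega
  have main0 := main 0 (by omega) (fun w hw => c.deg_W w (hΓW hw))
  rw [mul_zero, add_zero] at main0
  have mains : ∀ α, (∀ w ∈ Γ, G.degree w + 1 ≤ α) → 1 ≤ α →
      (∑ x, G.degree x) + (2 * G.degree u + G.degree v - n) * (G.degree u + 1 - α) ≤
        G.degree v * (G.degree v + 1) + 2 * G.degree u * (n - 1 - G.degree v) := by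
    intro α hα h1
    apply main
    · omega
    · intro w hw
      have := hα w hw
      have := c.deg_W w (hΓW hw)
      omega
  rcases ht with ⟨rfl, h7⟩ | ⟨rfl, h16⟩ | ⟨rfl, h28⟩
  · by_cases h9 : 9 ≤ n
    · have := num_big h2t hij hg (Or.inr (Or.inr ⟨rfl, h9⟩))
      omega
    have hn78 : n = 7 ∨ n = 8 := by omega
    rcases hn78 with rfl | rfl
    · -- order 7
      have : G.degree u = 2 := by omega
      have : G.degree v = 2 ∨ G.degree v = 3 := by omega
      rw [‹G.degree u = 2›] at main0
      rcases this with h | h <;> rw [h] at main0 <;> omega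
    · have hv : G.degree v ≤ 4 := by omega
      have hu : G.degree u ≤ 3 := by omega
      by_cases h33 : G.degree u = 3 ∧ G.degree v = 3
      · obtain ⟨hu3, hv3⟩ := h33
        have hr3 : (Cc G u v).card = 3 := by
          have hW := sum_bd _ _ _ c.deg_W
          rw [hu3] at sU hW
          rw [hv3] at sV
          omega
        have hUe : (Uu G u v).card = 0 := by omega
        have hVe : (Uu G v u).card = 0 := by omega
        have hWe : (Ww G u v).card = 3 := by omega
        have sW := sum_bd _ _ _ c.deg_W
        rw [hUe, zero_mul] at sU
        rw [hVe, zero_mul] at sV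
        rw [hr3] at sC
        rw [hWe, hu3] at sW
        norm_num at sC
        norm_num at hD
        have hCt := sum_tight (Cc G u v) (fun x => G.degree x) 7
          (fun x _ => by have := deg_le (G := G) x; omega) (by rw [hr3]; omega)
        have hWt := sum_tight (Ww G u v) (fun x => G.degree x) 3
          (fun x hx => by have := c.deg_W x hx; omega) (by rw [hWe]; omega)
        have hWC : ∀ x ∈ Ww G u v, ∀ y, G.Adj x y → y ∈ Cc G u v := by
          intro x hx
          apply nbr_eq
          · intro y hy
            refine (univ_of_deg (by have := hCt y hy; omega) x ?_).symm
            rintro rfl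
            exact (mem_Ww.1 hx).2.2.1 (mem_Cc.1 hy).1
          · rw [hWt x hx, hr3]
        have hUC : ∀ y, G.Adj u y → y ∈ Cc G u v := by
          apply nbr_eq
          · intro y hy; exact (mem_Cc.1 hy).1
          · omega
        have huW : u ∉ Ww G u v := fun h => (mem_Ww.1 h).1 rfl
        have := tough_isolate c.tough (insert u (Ww G u v)) (Cc G u v) (by
          rw [Finset.disjoint_left]
          intro x hx hxC
          rw [Finset.mem_insert] at hx
          rcases hx with rfl | hx
          · exact (mem_Cc.1 hxC).1.ne rfl
          · exact (mem_Ww.1 hx).2.2.1 (mem_Cc.1 hxC).1) (by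
          intro x hx
          rw [Finset.mem_insert] at hx
          rcases hx with rfl | hx
          · exact hUC
          · exact hWC x hx) (Finset.insert_nonempty _ _) v (by
          rw [Finset.mem_insert]
          rintro (h | h)
          · exact c.ne h.symm
          · exact (mem_Ww.1 h).2.1 rfl) (fun h => (mem_Cc.1 h).2.ne rfl)
        rw [Finset.card_insert_of_notMem huW] at this
        omega
      · have : G.degree u = 2 ∨ G.degree u = 3 := by omega
        have hv4 : G.degree v = 2 ∨ G.degree v = 3 ∨ G.degree v = 4 := by omega
        rcases this with h | h <;> rcases hv4 with h' | h' | h' <;> rw [h, h'] at main0 <;> omega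
  · by_cases h : 23 ≤ n
    · have := num_big h2t hij hg (Or.inl ⟨rfl, h⟩)
      omega
    · have h1 := num_small2 n (Finset.mem_Ico.2 (by omega)) _ (Finset.mem_range.2 (by omega))
        _ (Finset.mem_Icc.2 ⟨h2t, hij⟩) hg
      have h3 := mains (n / 3) (fun w hw => by have := (hΓd w hw).1; omega) (by omega)
      have e : n - 2 * 2 - 1 = n - 5 := by omega
      rw [e] at hD
      norm_num at hD
      omega
  · by_cases h : 36 ≤ n
    · have := num_big h2t hij hg (Or.inr (Or.inl ⟨rfl, h⟩))
      omega
    · have h1 := num_small3 n (Finset.mem_Ico.2 (by omega)) _ (Finset.mem_range.2 (by omega))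
        _ (Finset.mem_Icc.2 ⟨h2t, hij⟩) hg
      have h3 := mains (n / 4) (fun w hw => by have := (hΓd w hw).1; omega) (by omega)
      have e : n - 2 * 3 - 1 = n - 7 := by omega
      rw [e] at hD
      norm_num at hD
      omega

theorem num_zero {n i j t D : ℕ} (h2 : 2 * t ≤ i) (hij : i ≤ j) (hg : i + j + 1 = n)
    (ht : 2 ≤ t) (hD : D ≤ i + j + (i - 1) * i + (j - 1) * j + (n - 1)) :
    D < (n - 2 * t) * (n - 2 * t - 1) + 6 * t ^ 2 := by
  obtain ⟨y, rfl⟩ : ∃ y, i = 2 * t + y := ⟨i - 2 * t, by omega⟩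
  obtain ⟨z, rfl⟩ : ∃ z, j = 2 * t + y + z := ⟨j - (2 * t + y), by omega⟩
  obtain ⟨s, rfl⟩ : ∃ s, t = s + 2 := ⟨t - 2, by omega⟩
  subst hg
  have e1 : 2 * (s + 2) + y - 1 = 2 * s + 3 + y := by omega
  have e2 : 2 * (s + 2) + y + z - 1 = 2 * s + 3 + y + z := by omega
  have e3 : 2 * (s + 2) + y + (2 * (s + 2) + y + z) + 1 - 1 = 4 * s + 8 + 2 * y + z := by omega
  have e4 : 2 * (s + 2) + y + (2 * (s + 2) + y + z) + 1 - 2 * (s + 2) = 2 * s + 5 + 2 * y + z := by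
    omega
  have e5 : 2 * s + 5 + 2 * y + z - 1 = 2 * s + 4 + 2 * y + z := by omega
  rw [e1, e2, e3] at hD
  rw [e4, e5]
  nlinarith [Nat.zero_le (y * z), Nat.zero_le (y * s), Nat.zero_le (y * y), Nat.zero_le (s * s)]

/-- Case of zero gap, `t ≥ 2`. -/
theorem Cfg.gap_zero {t : ℕ} {u v : V} (c : Cfg G t u v) {n : ℕ} (hn : Fintype.card V = n)
    (ht : 2 ≤ t)
    (hD : (n - 2 * t) * (n - 2 * t - 1) + 6 * t ^ 2 ≤ ∑ x, G.degree x)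
    (hg : G.degree u + G.degree v + 1 = n) : False := by
  have h2t := c.two_t
  have hij := c.le
  obtain ⟨-, Γ, hΓW, hΓc, hΓd, L, R, hLR⟩ := c.gen
  have hcs := card_split c.ne c.nadj
  have hsum := sum_split c.ne c.nadj (fun x => G.degree x)
  have hi := degree_split (G := G) u v
  have hj := degree_split (G := G) v u
  rw [Cc_comm] at hj
  have sU := sum_bd _ _ _ c.deg_U
  have sV := sum_bd _ _ _ c.deg_V
  have sC := sum_bd (Cc G u v) (fun x => G.degree x) (n - 1) (fun x _ => hn ▸ deg_le x)
  rw [hn] at hcs hΓc hΓd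
  have hΓ : Γ = Ww G u v := Finset.eq_of_subset_of_card_le hΓW (by omega)
  rcases Finset.eq_empty_or_nonempty Γ with h0 | hne
  · rw [h0] at hΓ
    rw [← hΓ] at hcs hsum
    simp only [Finset.card_empty, Finset.sum_empty] at hcs hsum
    have hr : (Cc G u v).card = 1 := by omega
    have := num_zero (D := ∑ x, G.degree x) h2t hij hg ht (by
      rw [hr] at hi hj sC
      rw [show G.degree u - 1 = (Uu G u v).card by omega,
        show G.degree v - 1 = (Uu G v u).card by omega]
      omega)
    omega
  · have hS : ∀ x, x ∈ Γ.image L ∪ Γ.image R → G.Adj v x ∨ G.Adj u x := by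
      intro x hx
      rw [Finset.mem_union, Finset.mem_image, Finset.mem_image] at hx
      rcases hx with ⟨w, hw, rfl⟩ | ⟨w, hw, rfl⟩
      · exact Or.inl (hLR w hw).1
      · exact Or.inr (hLR w hw).2.1
    have := tough_isolate c.tough Γ (Γ.image L ∪ Γ.image R) (by
        rw [Finset.disjoint_left]
        intro x hx hxS
        have hx' := mem_Ww.1 (hΓW hx)
        rcases hS x hxS with h | h
        · exact hx'.2.2.2 h
        · exact hx'.2.2.1 h) (by
        intro x hx y hxy
        obtain ⟨w, hw, h⟩ := (hLR x hx).2.2 hΓ y hxy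
        rw [Finset.mem_union, Finset.mem_image, Finset.mem_image]
        rcases h with h | h
        · exact Or.inl ⟨w, hw, h.symm⟩
        · exact Or.inr ⟨w, hw, h.symm⟩) hne u (fun h => (mem_Ww.1 (hΓW h)).1 rfl) (by
        intro h
        rcases hS u h with h | h
        · exact c.nadj h.symm
        · exact h.ne rfl)
    have h1 := Finset.card_union_le (Γ.image L) (Γ.image R)
    have h2 : (Γ.image L).card ≤ Γ.card := Finset.card_image_le
    have h3 : (Γ.image R).card ≤ Γ.card := Finset.card_image_le
    nlinarith

end TP

namespace TP

set_option linter.unusedSectionVars false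

variable {V : Type*} [DecidableEq V] [Fintype V]
variable {G : SimpleGraph V} [DecidableRel G.Adj]

/-- arithmetic, `t = 1`, nested neighbourhoods, `i ≥ 3` -/
theorem num_nested {n i e x D b : ℕ} (hi : 3 ≤ i) (hb : b + 2 * i + 1 = n) (hb1 : 1 ≤ b)
    (he : e ≤ i) (he1 : 1 ≤ e) (hx : i + 1 ≤ x + e) (hxi : x ≤ i)
    (hD : D + x * e ≤ (n - 1) + b * (b + i) + i * (n - 1) + (i - 2) * i + e) :
    D < (n - 2) * (n - 3) + 6 := by
  obtain ⟨k, rfl⟩ : ∃ k, i = k + 3 := ⟨i - 3, by omega⟩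
  obtain ⟨f, hf⟩ : ∃ f, k + 3 = e + f := ⟨k + 3 - e, by omega⟩
  obtain ⟨c, rfl⟩ : ∃ c, b = c + 1 := ⟨b - 1, by omega⟩
  have e1 : n - 1 = c + 2 * k + 7 := by omega
  have e2 : n - 2 = c + 2 * k + 6 := by omega
  have e3 : n - 3 = c + 2 * k + 5 := by omega
  have e4 : k + 3 - 2 = k + 1 := by omega
  rw [e1, e4] at hD
  rw [e2, e3]
  have hxe : (f + 1) * e ≤ x * e := Nat.mul_le_mul_right e (by omega)
  have hfe : f * 1 ≤ f * e := Nat.mul_le_mul_left f he1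
  nlinarith [Nat.zero_le (k * c), Nat.zero_le (k * k)]

/-- nested case `N(u) ⊆ N(v)` -/
theorem Cfg.one_nested {u v : V} (c : Cfg G 1 u v) {n : ℕ} (hn : Fintype.card V = n)
    (h7 : 7 ≤ n)
    (hD : (n - 2) * (n - 3) + 6 ≤ ∑ x, G.degree x)
    (hg : G.degree u + G.degree v + 1 = n) (hr : (Cc G u v).card = G.degree u) : False := by
  have h2t := c.two_t
  have hij := c.le
  obtain ⟨-, Γ, hΓW, hΓc, hΓd, L, R, hLR⟩ := c.gen
  have hcs := card_split c.ne c.nadj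
  have hsum := sum_split c.ne c.nadj (fun x => G.degree x)
  have hi := degree_split (G := G) u v
  have hj := degree_split (G := G) v u
  rw [Cc_comm] at hj
  have sV := sum_bd _ _ _ c.deg_V
  rw [hn] at hcs hΓc hΓd
  have hΓ : Γ = Ww G u v := Finset.eq_of_subset_of_card_le hΓW (by omega)
  have hUC : ∀ y, G.Adj u y → y ∈ Cc G u v :=
    nbr_eq (fun y hy => (mem_Cc.1 hy).1) (by omega)
  have huW : u ∉ Ww G u v := fun h => (mem_Ww.1 h).1 rfl
  have hUe : Uu G u v = ∅ := Finset.card_eq_zero.1 (by omega)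
  rw [hUe, Finset.sum_empty] at hsum
  by_cases hall : ∀ x ∈ Ww G u v, ∀ y, G.Adj x y → y ∈ Cc G u v
  · have := tough_isolate c.tough (insert u (Ww G u v)) (Cc G u v) (by
      rw [Finset.disjoint_left]
      intro x hx hxC
      rw [Finset.mem_insert] at hx
      rcases hx with rfl | hx
      · exact (mem_Cc.1 hxC).1.ne rfl
      · exact (mem_Ww.1 hx).2.2.1 (mem_Cc.1 hxC).1) (by
      intro x hx
      rw [Finset.mem_insert] at hx
      rcases hx with rfl | hx
      · exact hUC
      · exact hall x hx) (Finset.insert_nonempty _ _) v (by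
      rw [Finset.mem_insert]
      rintro (h | h)
      · exact c.ne h.symm
      · exact (mem_Ww.1 h).2.1 rfl) (fun h => (mem_Cc.1 h).2.ne rfl)
    rw [Finset.card_insert_of_notMem huW] at this
    omega
  push Not at hall
  obtain ⟨w, hw, q, hwq, hqC⟩ := hall
  have hqV : q ∈ Uu G v u := by
    obtain ⟨x, hx, h⟩ := (hLR w (hΓ ▸ hw)).2.2 hΓ q hwq
    have hqu : ¬ G.Adj u q := fun h => hqC (hUC q h)
    rw [mem_Uu]
    refine ⟨?_, hqu⟩
    rcases h with rfl | rfl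
    · exact (hLR x hx).1
    · exact absurd (hLR x hx).2.1 hqu
  have hb1 : 1 ≤ (Uu G v u).card := Finset.card_pos.2 ⟨q, hqV⟩
  have hw' := mem_Ww.1 hw
  set e := G.degree w with he
  have hei : e ≤ G.degree u := c.deg_W w hw
  have he2 : 2 ≤ e := min_deg c.tough hw'.2.1 (fun h => hw'.2.2.2 h.symm)
  set X := (Cc G u v).filter (fun s => ¬ G.Adj w s) with hX
  set Y := (Cc G u v).filter (fun s => G.Adj w s) with hY
  have hXY : Y.card + X.card = (Cc G u v).card := Finset.card_filter_add_card_filter_not _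
  have hYe : Y.card + 1 ≤ e := by
    have : insert q Y ⊆ G.neighborFinset w := by
      intro z hz
      rw [mem_neighborFinset]
      rw [Finset.mem_insert] at hz
      rcases hz with rfl | hz
      · exact hwq
      · exact (Finset.mem_filter.1 hz).2
    have := Finset.card_le_card this
    rw [card_neighborFinset_eq_degree, Finset.card_insert_of_notMem (by
      intro h; exact hqC (Finset.mem_filter.1 h).1)] at this
    exact this
  have hsX : ∑ x ∈ Cc G u v, G.degree x = ∑ x ∈ Y, G.degree x + ∑ x ∈ X, G.degree x :=
    (Finset.sum_filter_add_sum_filter_not _ _ _).symm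
  have dX : ∀ x ∈ X, G.degree x ≤ n - 1 - e := by
    intro x hx
    have hx' := Finset.mem_filter.1 hx
    have := c.sum w x (by rintro rfl; exact hw'.2.2.1 (mem_Cc.1 hx'.1).1) hx'.2
    omega
  have sX := sum_bd X _ _ dX
  have sY := sum_bd Y (fun x => G.degree x) (n - 1) (fun x _ => hn ▸ deg_le x)
  have hsW : ∑ x ∈ Ww G u v, G.degree x = e + ∑ x ∈ (Ww G u v).erase w, G.degree x :=
    (Finset.add_sum_erase _ _ hw).symm
  have sW := sum_bd ((Ww G u v).erase w) (fun x => G.degree x) (G.degree u)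
    (fun x hx => c.deg_W x (Finset.mem_of_mem_erase hx))
  rw [Finset.card_erase_of_mem hw] at sW
  by_cases h3 : 3 ≤ G.degree u
  · have := num_nested (n := n) (i := G.degree u) (e := e) (x := X.card) (D := ∑ x, G.degree x)
      (b := (Uu G v u).card) h3 (by omega) hb1 hei (by omega) (by omega) (by omega) (by
      have m1 : X.card * (n - 1 - e) + X.card * e = X.card * (n - 1) := by
        rw [← Nat.mul_add]; congr 1; omega
      have m2 : X.card * (n - 1) + Y.card * (n - 1) = G.degree u * (n - 1) := by
        rw [← Nat.add_mul]; congr 1; omega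
      have m3 : (Uu G v u).card * G.degree v =
          (Uu G v u).card * ((Uu G v u).card + G.degree u) := by
        congr 1; omega
      rw [show (Ww G u v).card - 1 = G.degree u - 2 by omega] at sW
      omega)
    omega
  · have hu2 : G.degree u = 2 := by omega
    have hee : e = 2 := by omega
    have hvn : G.degree v = n - 3 := by omega
    have hbn : (Uu G v u).card = n - 5 := by omega
    have hW1 : (Ww G u v).card = 1 := by omega
    have hWw : ∀ x ∈ Ww G u v, x = w := by
      obtain ⟨z, hz⟩ := Finset.card_eq_one.1 hW1
      intro x hx
      rw [hz, Finset.mem_singleton] at hx hw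
      rw [hx, hw]
    rw [hW1] at sW
    simp only [le_refl, Nat.sub_self, zero_mul] at sW
    have hX1 : 1 ≤ X.card := by omega
    obtain ⟨s, hs⟩ := Finset.card_pos.1 hX1
    have hs' := Finset.mem_filter.1 hs
    have hds := dX s hs
    -- the total
    have hsC : ∑ x ∈ Cc G u v, G.degree x = G.degree s + ∑ x ∈ (Cc G u v).erase s, G.degree x :=
      (Finset.add_sum_erase _ _ hs'.1).symm
    have sC := sum_bd ((Cc G u v).erase s) (fun x => G.degree x) (n - 1)
      (fun x _ => hn ▸ deg_le x)
    have hCe : ((Cc G u v).erase s).card = 1 := by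
      rw [Finset.card_erase_of_mem hs'.1]; omega
    rw [hCe, one_mul] at sC
    have arith : (n - 2) * (n - 3) + 6 = (n - 5) * (n - 3) + 3 * n - 3 := by
      obtain ⟨k, rfl⟩ : ∃ k, n = k + 5 := ⟨n - 5, by omega⟩
      simp only [Nat.add_sub_cancel, show k + 5 - 2 = k + 3 by omega,
        show k + 5 - 3 = k + 2 by omega]
      have : (k + 3) * (k + 2) + 6 + 3 = k * (k + 2) + 3 * (k + 5) := by ring
      omega
    rw [hbn, hvn] at sV
    have hVt := sum_tight (Uu G v u) (fun x => G.degree x) (n - 3)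
      (fun x hx => by have := c.deg_V x hx; omega) (by rw [hbn]; omega)
    have hCt := sum_tight ((Cc G u v).erase s) (fun x => G.degree x) (n - 1)
      (fun x _ => hn ▸ deg_le x) (by rw [hCe]; omega)
    have hdss : n - 3 ≤ G.degree s := by omega
    have hbig : ∀ x, x ≠ s → n - 3 ≤ G.degree x → G.Adj s x := by
      intro x hx hxd
      by_contra hcon
      have := c.sum s x hx.symm hcon
      omega
    have hcov : (Finset.univ.erase s).erase w ⊆ G.neighborFinset s := by
      intro x hx
      rw [Finset.mem_erase, Finset.mem_erase] at hx
      obtain ⟨hxw, hxs, -⟩ := hx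
      rw [mem_neighborFinset]
      have hsC' := mem_Cc.1 hs'.1
      by_cases hxu : x = u
      · rw [hxu]; exact hsC'.1.symm
      by_cases hxv : x = v
      · rw [hxv]; exact hsC'.2.symm
      by_cases hux : G.Adj u x
      · have := hCt x (Finset.mem_erase.2 ⟨hxs, hUC x hux⟩)
        exact hbig x hxs (by omega)
      by_cases hvx : G.Adj v x
      · have := hVt x (mem_Uu.2 ⟨hvx, hux⟩)
        exact hbig x hxs (by omega)
      · exact absurd (hWw x (mem_Ww.2 ⟨hxu, hxv, hux, hvx⟩)) hxw
    have hfin := Finset.card_le_card hcov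
    have hws : w ≠ s := by rintro h; rw [h] at hw'; exact hw'.2.2.1 (mem_Cc.1 hs'.1).1
    rw [Finset.card_erase_of_mem (Finset.mem_erase.2 ⟨hws, Finset.mem_univ _⟩),
      Finset.card_erase_of_mem (Finset.mem_univ _), Finset.card_univ, hn,
      card_neighborFinset_eq_degree] at hfin
    omega

theorem num_nn {n i j r a b D : ℕ} (hi : 3 ≤ i) (hij : i ≤ j) (hn : i + j + 1 = n)
    (ha : i = a + r) (hb : j = b + r) (ha1 : 1 ≤ a) (hr : 1 ≤ r)
    (h7 : ¬ (n = 7 ∧ i = 3 ∧ r = 2)) (hn7 : 7 ≤ n)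
    (hD : D ≤ i + j + a * i + b * j + r * (n - 1) + (r - 1) * r) :
    D < (n - 2) * (n - 3) + 6 := by
  obtain ⟨s, rfl⟩ : ∃ s, r = s + 1 := ⟨r - 1, by omega⟩
  obtain ⟨f, rfl⟩ : ∃ f, a = f + 1 := ⟨a - 1, by omega⟩
  obtain ⟨k, hk⟩ : ∃ k, i = k + 3 := ⟨i - 3, by omega⟩
  obtain ⟨z, hz⟩ : ∃ z, j = i + z := ⟨j - i, by omega⟩
  have e1 : n - 1 = i + j := by omega
  have e2 : n - 2 = 2 * k + z + 5 := by omega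
  have e3 : n - 3 = 2 * k + z + 4 := by omega
  rw [e1] at hD
  rw [e2, e3]
  have hkf : k + 1 = f + s := by omega
  have hD' : D ≤ i + j + i * i + j * j + s * (s + 1) := by
    simp only [Nat.add_sub_cancel] at hD
    have : (f + 1) * i + b * j + (s + 1) * (i + j) = i * i + j * j := by
      rw [mul_add, show (f + 1) * i + b * j + ((s + 1) * i + (s + 1) * j) =
        ((f + 1) + (s + 1)) * i + (b + (s + 1)) * j by ring, ← ha, ← hb]
    omega
  have hs : s * (s + 1) ≤ (k + 1) * (k + 2) := Nat.mul_le_mul (by omega) (by omega)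
  have hkz : (k = 0 ∧ z = 0 ∧ s = 0) ∨ 1 ≤ k ∨ 1 ≤ z := by omega
  subst hz
  subst hk
  rcases hkz with ⟨rfl, rfl, rfl⟩ | h | h
  · simp at hD' ⊢; omega
  · nlinarith [Nat.zero_le (k * z), Nat.zero_le (z * z), Nat.zero_le (k * k)]
  · nlinarith [Nat.zero_le (k * z), Nat.zero_le (z * z), Nat.zero_le (k * k)]

/-- Case of zero gap, `t = 1`, not nested. -/
theorem Cfg.one_nn {u v : V} (c : Cfg G 1 u v) {n : ℕ} (hn : Fintype.card V = n)
    (h7 : 7 ≤ n)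
    (hD : (n - 2) * (n - 3) + 6 ≤ ∑ x, G.degree x)
    (hg : G.degree u + G.degree v + 1 = n) (hr : (Cc G u v).card < G.degree u) : False := by
  have h2t := c.two_t
  have hij := c.le
  obtain ⟨-, Γ, hΓW, hΓc, hΓd, L, R, hLR⟩ := c.gen
  have hcs := card_split c.ne c.nadj
  have hsum := sum_split c.ne c.nadj (fun x => G.degree x)
  have hi := degree_split (G := G) u v
  have hj := degree_split (G := G) v u
  rw [Cc_comm] at hj
  have sU := sum_bd _ _ _ c.deg_U
  have sV := sum_bd _ _ _ c.deg_V
  have sC := sum_bd (Cc G u v) (fun x => G.degree x) (n - 1) (fun x _ => hn ▸ deg_le x)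
  rw [hn] at hcs hΓc hΓd
  have hΓ : Γ = Ww G u v := Finset.eq_of_subset_of_card_le hΓW (by omega)
  have dW : ∀ x ∈ Ww G u v, G.degree x ≤ (Cc G u v).card := by
    intro x hx
    have := (hΓd x (hΓ ▸ hx)).2
    omega
  have sW := sum_bd _ _ _ dW
  have hW : (Ww G u v).card = (Cc G u v).card - 1 := by omega
  by_cases h3 : 3 ≤ G.degree u
  · by_cases hex : n = 7 ∧ G.degree u = 3 ∧ (Cc G u v).card = 2
    · obtain ⟨rfl, hu3, hr2⟩ := hex
      have hv3 : G.degree v = 3 := by omega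
      have hU1 : (Uu G u v).card = 1 := by omega
      have hV1 : (Uu G v u).card = 1 := by omega
      have hW1 : (Ww G u v).card = 1 := by omega
      rw [hU1, hu3] at sU
      rw [hV1, hv3] at sV
      rw [hr2] at sC
      rw [hW1, hr2] at sW
      norm_num at hD
      have tC := sum_tight (Cc G u v) (fun x => G.degree x) 6
        (fun x _ => by have := deg_le (G := G) x; omega) (by rw [hr2]; omega)
      obtain ⟨a, ha⟩ := Finset.card_eq_one.1 hU1
      obtain ⟨w, hw⟩ := Finset.card_eq_one.1 hW1
      have haU : a ∈ Uu G u v := by rw [ha]; simp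
      have hwW : w ∈ Ww G u v := by rw [hw]; simp
      have haU' := mem_Uu.1 haU
      have hwW' := mem_Ww.1 hwW
      have hda := c.deg_U a haU
      have hdw := dW w hwW
      have hCu : ∀ s ∈ Cc G u v, ∀ y, y ≠ s → G.Adj s y := fun s hs =>
        univ_of_deg (by have := tC s hs; omega)
      have hNw : ∀ y, G.Adj w y → y ∈ Cc G u v := by
        apply nbr_eq
        · intro y hy
          exact (hCu y hy w (by rintro rfl; exact hwW'.2.2.1 (mem_Cc.1 hy).1)).symm
        · omega
      have hNa : ∀ y, G.Adj a y → y ∈ insert u (Cc G u v) := by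
        apply nbr_eq
        · intro y hy
          rw [Finset.mem_insert] at hy
          rcases hy with rfl | hy
          · exact haU'.1.symm
          · exact (hCu y hy a (by rintro rfl; exact haU'.2 (mem_Cc.1 hy).2)).symm
        · rw [Finset.card_insert_of_notMem (fun h => (mem_Cc.1 h).1.ne rfl)]; omega
      have hNu : ∀ y, G.Adj u y → y ∈ insert a (Cc G u v) := by
        apply nbr_eq
        · intro y hy
          rw [Finset.mem_insert] at hy
          rcases hy with rfl | hy
          · exact haU'.1
          · exact (mem_Cc.1 hy).1
        · rw [Finset.card_insert_of_notMem (fun h => haU'.2 (mem_Cc.1 h).2)]; omega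
      set f : V → ℕ := fun x => if x = w then 0 else if x = u ∨ x = a then 1 else 2 with hf
      have hwa : w ≠ a := by rintro rfl; exact hwW'.2.2.1 haU'.1
      have hva : v ≠ a := by rintro rfl; exact c.nadj haU'.1
      have hf' : ∀ x y, x ∉ Cc G u v → y ∉ Cc G u v → G.Adj x y → (x ≠ w) ∧
          ((x = u ∨ x = a) → (y = u ∨ y = a)) := by
        intro x y hx hy hxy
        refine ⟨by rintro rfl; exact hy (hNw y hxy), ?_⟩
        rintro (rfl | rfl)
        · have := Finset.mem_insert.1 (hNu y hxy)
          tauto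
        · have := Finset.mem_insert.1 (hNa y hxy)
          tauto
      have him : ({0, 1, 2} : Finset ℕ) ⊆ (Cc G u v)ᶜ.image f := by
        intro z hz
        rw [Finset.mem_image]
        simp only [Finset.mem_insert, Finset.mem_singleton] at hz
        rcases hz with rfl | rfl | rfl
        · refine ⟨w, ?_, by simp [hf]⟩
          rw [Finset.mem_compl]; exact fun h => hwW'.2.2.1 (mem_Cc.1 h).1
        · refine ⟨u, ?_, by simp [hf, hwW'.1.symm]⟩
          rw [Finset.mem_compl]; exact fun h => (mem_Cc.1 h).1.ne rfl
        · refine ⟨v, ?_, by simp [hf, hwW'.2.1.symm, c.ne.symm, hva]⟩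
          rw [Finset.mem_compl]; exact fun h => (mem_Cc.1 h).2.ne rfl
      have hle := Finset.card_le_card him
      have h33 : ({0, 1, 2} : Finset ℕ).card = 3 := by decide
      rw [h33] at hle
      have := tough_image c.tough f (Cc G u v) (by
        intro x y hx hy hxy
        have h1 := hf' x y hx hy hxy
        have h2 := hf' y x hy hx hxy.symm
        have h3 : (x = u ∨ x = a) ↔ (y = u ∨ y = a) := ⟨h1.2, h2.2⟩
        simp only [hf, h1.1, h2.1, h3]) (by omega)
      omega
    · have := num_nn (n := n) (D := ∑ x, G.degree x) h3 hij hg hi hj (by omega) (by omega) hex h7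
        (by rw [hW] at sW; omega)
      omega
  · have hu2 : G.degree u = 2 := by omega
    have hr1 : (Cc G u v).card = 1 := by omega
    have hU1 : (Uu G u v).card = 1 := by omega
    have hW0 : (Ww G u v).card = 0 := by omega
    obtain ⟨a, ha⟩ := Finset.card_eq_one.1 hU1
    obtain ⟨s, hs⟩ := Finset.card_eq_one.1 hr1
    have haU : a ∈ Uu G u v := by rw [ha]; simp
    have hsC : s ∈ Cc G u v := by rw [hs]; simp
    have haU' := mem_Uu.1 haU
    have hsC' := mem_Cc.1 hsC
    have hda := c.deg_U a haU
    have hva : v ≠ a := by rintro rfl; exact c.nadj haU'.1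
    have hda2 : 2 ≤ G.degree a := min_deg c.tough hva.symm (fun h => haU'.2 h.symm)
    have has : a ≠ s := by rintro rfl; exact haU'.2 hsC'.2
    by_cases hadj : G.Adj a s
    · have hNa : ∀ y, G.Adj a y → y ∈ ({u, s} : Finset V) := by
        apply nbr_eq
        · intro y hy
          rw [Finset.mem_insert, Finset.mem_singleton] at hy
          rcases hy with rfl | rfl
          · exact haU'.1.symm
          · exact hadj
        · rw [Finset.card_pair hsC'.1.ne]; omega
      have hNu : ∀ y, G.Adj u y → y ∈ ({a, s} : Finset V) := by
        apply nbr_eq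
        · intro y hy
          rw [Finset.mem_insert, Finset.mem_singleton] at hy
          rcases hy with rfl | rfl
          · exact haU'.1
          · exact hsC'.1
        · rw [Finset.card_pair has]; omega
      simp only [Finset.mem_insert, Finset.mem_singleton] at hNa hNu
      set f : V → ℕ := fun x => if x = u ∨ x = a then 0 else 1 with hf
      have hf' : ∀ x y, x ∉ ({s} : Finset V) → y ∉ ({s} : Finset V) → G.Adj x y →
          ((x = u ∨ x = a) → (y = u ∨ y = a)) := by
        intro x y hx hy hxy
        rw [Finset.mem_singleton] at hx hy
        rintro (rfl | rfl)
        · have := hNu y hxy; tauto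
        · have := hNa y hxy; tauto
      have him : ({0, 1} : Finset ℕ) ⊆ ({s} : Finset V)ᶜ.image f := by
        intro z hz
        rw [Finset.mem_image]
        simp only [Finset.mem_insert, Finset.mem_singleton] at hz
        rcases hz with rfl | rfl
        · exact ⟨u, by simpa using hsC'.1.ne, by simp [hf]⟩
        · exact ⟨v, by simpa using hsC'.2.ne, by simp [hf, c.ne.symm, hva]⟩
      have hle := Finset.card_le_card him
      have h33 : ({0, 1} : Finset ℕ).card = 2 := by decide
      rw [h33] at hle
      have := tough_image c.tough f {s} (by
        intro x y hx hy hxy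
        have h3 : (x = u ∨ x = a) ↔ (y = u ∨ y = a) :=
          ⟨hf' x y hx hy hxy, hf' y x hy hx hxy.symm⟩
        simp only [hf, h3]) (by omega)
      rw [Finset.card_singleton] at this
      omega
    · have hsa := c.sum a s has hadj
      rw [hs, Finset.sum_singleton, ha, Finset.sum_singleton, Finset.card_eq_zero.1 hW0,
        Finset.sum_empty] at hsum
      have hvn : G.degree v = n - 3 := by omega
      have hbn : (Uu G v u).card = n - 4 := by omega
      rw [hbn, hvn] at sV
      have arith : (n - 2) * (n - 3) + 6 = (n - 4) * (n - 3) + 2 * n := by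
        obtain ⟨k, rfl⟩ : ∃ k, n = k + 4 := ⟨n - 4, by omega⟩
        simp only [Nat.add_sub_cancel, show k + 4 - 2 = k + 2 by omega,
          show k + 4 - 3 = k + 1 by omega]
        ring
      omega

end TP

namespace TP

set_option linter.unusedSectionVars false

variable {V : Type*} [DecidableEq V] [Fintype V]

theorem Cfg.false {G : SimpleGraph V} [DecidableRel G.Adj] {t : ℕ} {u v : V} (c : Cfg G t u v)
    {n : ℕ} (hn : Fintype.card V = n)
    (ht : (t = 1 ∧ 7 ≤ n) ∨ (t = 2 ∧ 16 ≤ n) ∨ (t = 3 ∧ 28 ≤ n))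
    (hD : (n - 2 * t) * (n - 2 * t - 1) + 6 * t ^ 2 ≤ ∑ x, G.degree x) : False := by
  have hg := c.gen.1
  rw [hn] at hg
  by_cases h : G.degree u + G.degree v + 2 ≤ n
  · exact c.gap_pos hn ht hD h
  have h0 : G.degree u + G.degree v + 1 = n := by omega
  by_cases ht2 : 2 ≤ t
  · exact c.gap_zero hn ht2 hD h0
  have ht1 : t = 1 := by omega
  subst ht1
  have hD' : (n - 2) * (n - 3) + 6 ≤ ∑ x, G.degree x := by
    have e : n - 2 * 1 - 1 = n - 3 := by omega
    rw [e] at hD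
    norm_num at hD
    exact hD
  have hi := degree_split (G := G) u v
  by_cases hr : (Cc G u v).card = G.degree u
  · exact c.one_nested hn (by omega) hD' h0 hr
  · exact c.one_nn hn (by omega) hD' h0 (by omega)

theorem exists_cfg {G : SimpleGraph V} {t : ℕ} (ht : IsTough (t : ℝ) G) (hH : ¬ Ham G)
    (hn : 3 ≤ Fintype.card V) :
    ∃ (H : SimpleGraph V) (_ : DecidableRel H.Adj) (u v : V), G ≤ H ∧ Cfg H t u v := by
  classical
  obtain ⟨H, hGH, hmax⟩ := Set.Finite.exists_le_maximal
    (s := {H : SimpleGraph V | ¬ Ham H}) (Set.toFinite _) (a := G) hH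
  have hHH : ¬ Ham H := hmax.1
  have hpath : ∀ x y, x ≠ y → ¬ H.Adj x y → HP H x y Finset.univ := by
    intro x y hxy hadj
    apply path_of_add hxy hn hHH
    by_contra hcon
    have hle : H ≤ H ⊔ edge x y := le_sup_left
    have := hmax.2 (y := H ⊔ edge x y) hcon hle
    exact hadj (this (by simp [edge_adj, hxy]))
  set P := (Finset.univ : Finset (V × V)).filter (fun q => q.1 ≠ q.2 ∧ ¬ H.Adj q.1 q.2) with hP
  have hne : P.Nonempty := by
    by_contra hcon
    rw [Finset.not_nonempty_iff_eq_empty] at hcon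
    have hall : ∀ x y, x ≠ y → H.Adj x y := by
      intro x y hxy
      by_contra h
      have : (x, y) ∈ P := by simp [hP, hxy, h]
      rw [hcon] at this
      simp at this
    apply hHH
    -- a Hamiltonian path in the complete graph
    obtain ⟨φ⟩ := Fintype.truncEquivFin V
    set n := Fintype.card V with hnd
    set p : ℕ → V := fun k => φ.symm ⟨k % n, Nat.mod_lt _ (by omega)⟩ with hp
    have hinj : ∀ x y, x < n → y < n → p x = p y → x = y := by
      intro x y hx hy hxy
      have := Fin.ext_iff.1 (φ.symm.injective hxy)
      simp only [Nat.mod_eq_of_lt hx, Nat.mod_eq_of_lt hy] at this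
      exact this
    have A := HP.fn (G := H) p 0 (n-1) (by omega)
      (fun k _ h => hall _ _ (fun h' => by
        have := hinj k (k+1) (by omega) (by omega) h'; omega))
      (fun x y _ h2 _ h4 h => hinj x y (by omega) (by omega) h)
    refine ⟨p 0, p (n-1), ?_, hall _ _ (fun h' => by
        have := hinj 0 (n-1) (by omega) (by omega) h'; omega)⟩
    convert A
    symm
    apply Finset.eq_univ_of_card
    rw [card_im (N := n - 1) (fun x y hx hy h => hinj x y (by omega) (by omega) h) le_rfl]
    omega
  obtain ⟨q, hq, hqmax⟩ := Finset.exists_max_image P (fun q => H.degree q.1 + H.degree q.2) hne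
  have hq' := (Finset.mem_filter.1 hq).2
  have hsum : ∀ x y, x ≠ y → ¬ H.Adj x y →
      H.degree x + H.degree y ≤ H.degree q.1 + H.degree q.2 := by
    intro x y hxy h
    exact hqmax (x, y) (by simp [hP, hxy, h])
  rcases le_total (H.degree q.1) (H.degree q.2) with h | h
  · exact ⟨H, inferInstance, q.1, q.2, hGH, tough_mono hGH ht, hHH, hq'.1, hq'.2,
      hpath _ _ hq'.1 hq'.2, h, hsum⟩
  · refine ⟨H, inferInstance, q.2, q.1, hGH, tough_mono hGH ht, hHH, hq'.1.symm,
      fun h => hq'.2 h.symm, hpath _ _ hq'.1.symm (fun h => hq'.2 h.symm), h, ?_⟩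
    intro x y hxy hadj
    have := hsum x y hxy hadj
    omega

end TP

/-- Theorem 2.1: a connected `t`-tough graph (`t ∈ {1,2,3}`) of order `n` and
size `m ≥ C(n − 2t, 2) + 3t²` is pancyclic or bipartite, provided
`n ≥ 7` (t = 1), `n ≥ 16` (t = 2), or `n ≥ 28` (t = 3). -/
theorem tough_pancyclic_or_bipartite {n : ℕ} (G : SimpleGraph (Fin n))
    [DecidableRel G.Adj] (t : ℕ)
    (ht : (t = 1 ∧ 7 ≤ n) ∨ (t = 2 ∧ 16 ≤ n) ∨ (t = 3 ∧ 28 ≤ n))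
    (hconn : G.Connected) (htough : IsTough (t : ℝ) G)
    (hm : (n - 2 * t).choose 2 + 3 * t ^ 2 ≤ G.edgeFinset.card) :
    Pancyclic G ∨ G.Colorable 2 := by
  left
  have hcard : Fintype.card (Fin n) = n := Fintype.card_fin n
  have h2m : (n - 2 * t) * (n - 2 * t - 1) + 6 * t ^ 2 ≤ 2 * G.edgeFinset.card := by
    have h1 := Nat.choose_two_right (n - 2 * t)
    have h2 : (n - 2 * t) * (n - 2 * t - 1) % 2 = 0 :=
      Nat.even_iff.1 (Nat.even_mul_pred_self _)
    omega
  have hD : (n - 2 * t) * (n - 2 * t - 1) + 6 * t ^ 2 ≤ ∑ x, G.degree x := by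
    rw [G.sum_degrees_eq_twice_card_edges]; exact h2m
  apply TP.bondy (by rw [hcard]; omega)
  · by_contra hH
    obtain ⟨H, hdec, u, v, hGH, c⟩ := TP.exists_cfg htough hH (by rw [hcard]; omega)
    refine c.false hcard ht (hD.trans (Finset.sum_le_sum fun x _ => ?_))
    rw [← card_neighborFinset_eq_degree, ← card_neighborFinset_eq_degree]
    apply Finset.card_le_card
    intro y hy
    rw [mem_neighborFinset] at hy ⊢
    exact hGH hy
  · rw [hcard]
    refine lt_of_lt_of_le ?_ (show 2 * ((n - 2 * t) * (n - 2 * t - 1) + 6 * t ^ 2) ≤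
      4 * G.edgeFinset.card by omega)
    rcases ht with ⟨rfl, h⟩ | ⟨rfl, h⟩ | ⟨rfl, h⟩
    · obtain ⟨k, rfl⟩ : ∃ k, n = k + 7 := ⟨n - 7, by omega⟩
      rw [show k + 7 - 2 * 1 = k + 5 by omega, show k + 5 - 1 = k + 4 by omega]
      nlinarith
    · obtain ⟨k, rfl⟩ : ∃ k, n = k + 16 := ⟨n - 16, by omega⟩
      rw [show k + 16 - 2 * 2 = k + 12 by omega, show k + 12 - 1 = k + 11 by omega]
      nlinarith
    · obtain ⟨k, rfl⟩ : ∃ k, n = k + 28 := ⟨n - 28, by omega⟩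
      rw [show k + 28 - 2 * 3 = k + 22 by omega, show k + 22 - 1 = k + 21 by omega]
      nlinarith
end
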